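/- arXiv:1904.10055 — 7 statements merged into one kernel-verified Lean document; each statement's English description precedes it below -/
import Mathlib

section
/- Let e ∈ ℝ⁴ be a nonzero vector and let F_{αβ} : ℝ⁴ → ℝ (α, β ∈ {0,1,2,3}) be smooth compactly supported functions that are antisymmetric, F_{αβ} = −F_{βα}, and satisfy the Bianchi identity ∂_γ F_{αβ}(x) + ∂_α F_{βγ}(x) + ∂_β F_{γα}(x) = 0 for all indices α, β, γ and all x ∈ ℝ⁴. Define A_α(x) = ∫₀^∞ Σ_β F_{αβ}(x + t·e) e_β dt. Then for every x the integrand is integrable on (0,∞), each A_α is differentiable, and ∂_α A_β(x) − ∂_β A_α(x) = F_{αβ}(x) for all α, β and all x ∈ ℝ⁴ (i.e. the string-localized potential A obtained by integrating the closed two-form F along the ray in direction e has curl equal to F). -/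
/-!
Let `G_α = ∑ β, F_{αβ} e_β`, so that `A_α` is the integral of `G_α` along the rays `t ↦ x + t e`.
The rays issuing from a bounded set meet the support of `G_α` only for `t` in a bounded interval,
hence partial derivatives pass under the integral sign and the curl of `A` is the ray integral of
the curl of `G`. By antisymmetry and the Bianchi identity (Cartan's formula for a closed form),
`∂_α G_β - ∂_β G_α = -∑ γ, e_γ ∂_γ F_{αβ}`, which along the ray is `-d/dt F_{αβ}(x + t e)`. Its
integral over `(0, ∞)` is `F_{αβ}(x)`, because `F` vanishes far out on the ray.
-/

open MeasureTheory

/-- Partial derivative of a function on ℝ⁴ in the direction of the α-th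
standard basis vector. -/
noncomputable def pd4 (f : (Fin 4 → ℝ) → ℝ) (i : Fin 4) (x : Fin 4 → ℝ) : ℝ :=
  fderiv ℝ f x (Pi.single i 1)

/-- The string-localized potential `A_α(x) = ∫₀^∞ Σ_β F_{αβ}(x + t e) e_β dt`. -/
noncomputable def stringPot (e : Fin 4 → ℝ) (F : Fin 4 → Fin 4 → (Fin 4 → ℝ) → ℝ)
    (α : Fin 4) (x : Fin 4 → ℝ) : ℝ :=
  ∫ t in Set.Ioi (0 : ℝ), ∑ β, F α β (x + t • e) * e β

section Ray

variable {E V : Type*} [NormedAddCommGroup E] [NormedSpace ℝ E] {e : E}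

lemma hasCompactSupport_comp_ray [Zero V] {f : E → V} (he : e ≠ 0) (hfc : HasCompactSupport f)
    (x : E) : HasCompactSupport fun t : ℝ => f (x + t • e) :=
  hfc.comp_isClosedEmbedding
    ((Homeomorph.addLeft x).isClosedEmbedding.comp (isClosedEmbedding_smul_left he))

open scoped Pointwise in
lemma exists_forall_mem_Icc_of_comp_ray_ne_zero [Zero V] {f : E → V} (he : e ≠ 0)
    (hfc : HasCompactSupport f) {s : Set E} (hs : Bornology.IsBounded s) :
    ∃ T : ℝ, ∀ x ∈ s, ∀ t : ℝ, f (x + t • e) ≠ 0 → t ∈ Set.Icc (-T) T := by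
  obtain ⟨R, hR⟩ := (hfc.isCompact.isBounded.sub hs).exists_norm_le
  refine ⟨R / ‖e‖, fun x hx t hne => abs_le.1 ?_⟩
  have hmem : t • e ∈ tsupport f - s :=
    ⟨x + t • e, subset_tsupport f hne, x, hx, add_sub_cancel_left x (t • e)⟩
  rw [le_div_iff₀ (norm_pos_iff.2 he), ← Real.norm_eq_abs, ← norm_smul]
  exact hR _ hmem

variable [NormedAddCommGroup V] {f g : E → V}

lemma integrable_comp_ray (he : e ≠ 0) (hf : Continuous f) (hfc : HasCompactSupport f) (x : E) :
    Integrable fun t : ℝ => f (x + t • e) :=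
  (hf.comp (by fun_prop)).integrable_of_hasCompactSupport (hasCompactSupport_comp_ray he hfc x)

lemma exists_integrable_forall_norm_comp_ray_le (he : e ≠ 0) (hf : Continuous f)
    (hfc : HasCompactSupport f) {s : Set E} (hs : Bornology.IsBounded s) :
    ∃ bound : ℝ → ℝ, Integrable bound ∧ ∀ x ∈ s, ∀ t, ‖f (x + t • e)‖ ≤ bound t := by
  obtain ⟨C, hC⟩ := hf.bounded_above_of_compact_support hfc
  obtain ⟨T, hT⟩ := exists_forall_mem_Icc_of_comp_ray_ne_zero he hfc hs
  refine ⟨(Set.Icc (-T) T).indicator fun _ => C,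
    (integrable_indicator_iff measurableSet_Icc).2 (integrableOn_const measure_Icc_lt_top.ne),
    fun x hx t => ?_⟩
  by_cases ht : t ∈ Set.Icc (-T) T
  · simpa only [Set.indicator_of_mem ht] using hC (x + t • e)
  · simp [Set.indicator_of_notMem ht, not_not.1 (mt (hT x hx t) ht)]

variable [NormedSpace ℝ V]

/-- The integral of `f` along the ray issuing from `x` in direction `e`, parametrized by
`t ↦ x + t • e`; it is the operation which takes a field to its string-localized primitive. -/
noncomputable def rayIntegral (e : E) (f : E → V) (x : E) : V :=
  ∫ t in Set.Ioi (0 : ℝ), f (x + t • e)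

lemma rayIntegral_sub {x : E} (hf : IntegrableOn (fun t : ℝ => f (x + t • e)) (Set.Ioi 0))
    (hg : IntegrableOn (fun t : ℝ => g (x + t • e)) (Set.Ioi 0)) :
    rayIntegral e (fun y => f y - g y) x = rayIntegral e f x - rayIntegral e g x :=
  integral_sub hf hg

lemma hasFDerivAt_rayIntegral (he : e ≠ 0) (hf : ContDiff ℝ 1 f) (hfc : HasCompactSupport f)
    (x : E) : HasFDerivAt (rayIntegral e f) (rayIntegral e (fderiv ℝ f) x) x := by
  have hf' : Continuous (fderiv ℝ f) := hf.continuous_fderiv one_ne_zero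
  have hfc' : HasCompactSupport (fderiv ℝ f) := hfc.fderiv ℝ
  obtain ⟨bound, hbound, hle⟩ :=
    exists_integrable_forall_norm_comp_ray_le he hf' hfc' (Metric.isBounded_ball (x := x) (r := 1))
  have hdiff (t : ℝ) (y : E) :
      HasFDerivAt (fun y => f (y + t • e)) (fderiv ℝ f (y + t • e)) y :=
    (hasFDerivAt_comp_add_right _).2 (hf.differentiable one_ne_zero _).hasFDerivAt
  exact hasFDerivAt_integral_of_dominated_of_fderiv_le (Metric.ball_mem_nhds x one_pos)
    (.of_forall fun y => (integrable_comp_ray he hf.continuous hfc y).aestronglyMeasurable.restrict)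
    (integrable_comp_ray he hf.continuous hfc x).restrict
    (integrable_comp_ray he hf' hfc' x).aestronglyMeasurable.restrict
    (.of_forall fun t y hy => hle y hy t) hbound.restrict (.of_forall fun t y _ => hdiff t y)

lemma fderiv_rayIntegral_apply (he : e ≠ 0) (hf : ContDiff ℝ 1 f) (hfc : HasCompactSupport f)
    (x v : E) : fderiv ℝ (rayIntegral e f) x v = rayIntegral e (fun y => fderiv ℝ f y v) x := by
  rw [(hasFDerivAt_rayIntegral he hf hfc x).fderiv]
  exact ContinuousLinearMap.integral_apply (integrable_comp_ray he
    (hf.continuous_fderiv one_ne_zero) (hfc.fderiv ℝ) x).restrict v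

lemma fderiv_rayIntegral_sub_fderiv_rayIntegral (he : e ≠ 0) (hf : ContDiff ℝ 1 f)
    (hfc : HasCompactSupport f) (hg : ContDiff ℝ 1 g) (hgc : HasCompactSupport g) (x v w : E) :
    fderiv ℝ (rayIntegral e f) x v - fderiv ℝ (rayIntegral e g) x w =
      rayIntegral e (fun y => fderiv ℝ f y v - fderiv ℝ g y w) x := by
  have hint {h : E → V} (hh : ContDiff ℝ 1 h) (hhc : HasCompactSupport h) (u : E) :
      IntegrableOn (fun t : ℝ => fderiv ℝ h (x + t • e) u) (Set.Ioi 0) :=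
    (integrable_comp_ray he ((hh.continuous_fderiv one_ne_zero).clm_apply continuous_const)
      (hhc.fderiv_apply ℝ u) x).integrableOn
  rw [fderiv_rayIntegral_apply he hf hfc, fderiv_rayIntegral_apply he hg hgc,
    rayIntegral_sub (hint hf hfc v) (hint hg hgc w)]

lemma rayIntegral_fderiv_self [CompleteSpace V] (he : e ≠ 0) (hf : ContDiff ℝ 1 f)
    (hfc : HasCompactSupport f) (x : E) :
    rayIntegral e (fun y => fderiv ℝ f y e) x = -f x := by
  have hderiv (t : ℝ) : deriv (fun t : ℝ => f (x + t • e)) t = fderiv ℝ f (x + t • e) e := by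
    have hray : HasDerivAt (fun t : ℝ => x + t • e) e t := by
      simpa using ((hasDerivAt_id t).smul_const e).const_add x
    exact ((hf.differentiable one_ne_zero _).hasFDerivAt.comp_hasDerivAt t hray).deriv
  calc rayIntegral e (fun y => fderiv ℝ f y e) x
      = ∫ t in Set.Ioi (0 : ℝ), deriv (fun t : ℝ => f (x + t • e)) t := by
        simp only [rayIntegral, hderiv]
    _ = -f (x + (0 : ℝ) • e) :=
        (hasCompactSupport_comp_ray he hfc x).integral_Ioi_deriv_eq (hf.comp (by fun_prop)) 0
    _ = -f x := by rw [zero_smul, add_zero]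

end Ray

section Contraction

variable {ι E V : Type*} [Fintype ι] [NormedAddCommGroup E]
  [NormedAddCommGroup V] [NormedSpace ℝ V] {F : ι → ι → E → V}

/-- The interior product of the two-form with components `F α β` and the constant vector field with
components `c`. The vector is contracted with the second index of `F`, as in the potential, so this
is minus the usual interior product. -/
def contraction (c : ι → ℝ) (F : ι → ι → E → V) (α : ι) (x : E) : V :=
  ∑ β, c β • F α β x

lemma hasCompactSupport_contraction (c : ι → ℝ) {α : ι}
    (hFc : ∀ β, HasCompactSupport (F α β)) : HasCompactSupport (contraction c F α) := by
  have hsum : contraction c F α = ∑ β, c β • F α β := by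
    ext x
    simp only [contraction, Finset.sum_apply, Pi.smul_apply]
  rw [hsum]
  exact Finset.sum_induction _ HasCompactSupport (fun _ _ => .add) .zero
    fun β _ => (hFc β).smul_left (f := fun _ => c β)

variable [NormedSpace ℝ E]

lemma contDiff_contraction {n : WithTop ℕ∞} (c : ι → ℝ) {α : ι}
    (hF : ∀ β, ContDiff ℝ n (F α β)) : ContDiff ℝ n (contraction c F α) :=
  ContDiff.sum fun β _ => (hF β).const_smul (c β)

lemma fderiv_contraction_apply (c : ι → ℝ) {α : ι} {x : E}
    (hF : ∀ β, DifferentiableAt ℝ (F α β) x) (v : E) :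
    fderiv ℝ (contraction c F α) x v = ∑ β, c β • fderiv ℝ (F α β) x v := by
  have h : HasFDerivAt (contraction c F α) (∑ β, c β • fderiv ℝ (F α β) x) x :=
    HasFDerivAt.fun_sum fun β _ => (hF β).hasFDerivAt.const_smul (c β)
  simp only [h.fderiv, sum_apply, smul_apply]

lemma fderiv_contraction_sub_fderiv_contraction (b : ι → E) (c : ι → ℝ) {x : E}
    (hF : ∀ α β, DifferentiableAt ℝ (F α β) x) (hanti : ∀ α β y, F α β y = -F β α y)
    (hBianchi : ∀ α β γ, fderiv ℝ (F α β) x (b γ) + fderiv ℝ (F β γ) x (b α) +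
      fderiv ℝ (F γ α) x (b β) = 0) (α β : ι) :
    fderiv ℝ (contraction c F β) x (b α) - fderiv ℝ (contraction c F α) x (b β) =
      -fderiv ℝ (F α β) x (∑ γ, c γ • b γ) := by
  have hneg (γ : ι) : fderiv ℝ (F α γ) x (b β) = -fderiv ℝ (F γ α) x (b β) := by
    rw [funext (hanti α γ), fderiv_fun_neg, neg_apply]
  have hcyclic (γ : ι) : fderiv ℝ (F β γ) x (b α) - fderiv ℝ (F α γ) x (b β) =
      -fderiv ℝ (F α β) x (b γ) := by
    rw [hneg, ← sub_eq_zero, ← hBianchi α β γ]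
    abel
  simp only [fderiv_contraction_apply c (hF _), map_sum, map_smul, ← Finset.sum_sub_distrib,
    ← smul_sub, hcyclic, smul_neg, Finset.sum_neg_distrib]

end Contraction

lemma stringPot_eq_rayIntegral (e : Fin 4 → ℝ) (F : Fin 4 → Fin 4 → (Fin 4 → ℝ) → ℝ) (α : Fin 4) :
    stringPot e F α = rayIntegral e (contraction ((Pi.basisFun ℝ (Fin 4)).repr e) F α) := by
  ext x
  simp only [stringPot, rayIntegral, contraction, Pi.basisFun_repr, smul_eq_mul, mul_comm]

theorem string_localized_potential_curl_general {ι E V : Type*} [Fintype ι]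
    [NormedAddCommGroup E] [NormedSpace ℝ E] [NormedAddCommGroup V] [NormedSpace ℝ V]
    [CompleteSpace V] (b : Module.Basis ι ℝ E) {e : E} (he : e ≠ 0) {F : ι → ι → E → V}
    (hF : ∀ α β, ContDiff ℝ 1 (F α β)) (hFc : ∀ α β, HasCompactSupport (F α β))
    (hanti : ∀ α β x, F α β x = -F β α x)
    (hBianchi : ∀ α β γ x, fderiv ℝ (F α β) x (b γ) + fderiv ℝ (F β γ) x (b α) +
      fderiv ℝ (F γ α) x (b β) = 0) :
    (∀ α x, IntegrableOn (fun t : ℝ => contraction (b.repr e) F α (x + t • e)) (Set.Ioi 0)) ∧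
    (∀ α, Differentiable ℝ (rayIntegral e (contraction (b.repr e) F α))) ∧
    (∀ α β x, fderiv ℝ (rayIntegral e (contraction (b.repr e) F β)) x (b α) -
      fderiv ℝ (rayIntegral e (contraction (b.repr e) F α)) x (b β) = F α β x) := by
  have hG (α) : ContDiff ℝ 1 (contraction (b.repr e) F α) := contDiff_contraction _ (hF α)
  have hGc (α) : HasCompactSupport (contraction (b.repr e) F α) :=
    hasCompactSupport_contraction _ (hFc α)
  have hcurl (α β y) : fderiv ℝ (contraction (b.repr e) F β) y (b α) -
      fderiv ℝ (contraction (b.repr e) F α) y (b β) = fderiv ℝ (fun z => -F α β z) y e := by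
    rw [fderiv_contraction_sub_fderiv_contraction b _
      (fun α β => (hF α β).differentiable one_ne_zero y) hanti (fun α β γ => hBianchi α β γ y),
      b.sum_repr, fderiv_fun_neg, neg_apply]
  refine ⟨fun α x => (integrable_comp_ray he (hG α).continuous (hGc α) x).integrableOn,
    fun α x => (hasFDerivAt_rayIntegral he (hG α) (hGc α) x).differentiableAt, fun α β x => ?_⟩
  rw [fderiv_rayIntegral_sub_fderiv_rayIntegral he (hG β) (hGc β) (hG α) (hGc α)]
  simp only [hcurl]
  rw [rayIntegral_fderiv_self he (hF α β).neg (hFc α β).neg, neg_neg]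

/-- The string-localized potential obtained by integrating a smooth, compactly
supported, antisymmetric two-form satisfying the Bianchi identity along the ray
in direction `e ≠ 0` is well defined, differentiable, and has curl equal to `F`. -/
theorem string_localized_potential_curl
    (e : Fin 4 → ℝ) (he : e ≠ 0)
    (F : Fin 4 → Fin 4 → (Fin 4 → ℝ) → ℝ)
    (hF : ∀ α β, ContDiff ℝ (⊤ : ℕ∞) (F α β))
    (hFc : ∀ α β, HasCompactSupport (F α β))
    (hanti : ∀ α β x, F α β x = - F β α x)
    (hBianchi : ∀ α β γ x,
      pd4 (F α β) γ x + pd4 (F β γ) α x + pd4 (F γ α) β x = 0) :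
    (∀ α x, IntegrableOn (fun t : ℝ => ∑ β, F α β (x + t • e) * e β) (Set.Ioi 0)) ∧
    (∀ α, Differentiable ℝ (stringPot e F α)) ∧
    (∀ α β x, pd4 (stringPot e F β) α x - pd4 (stringPot e F α) β x = F α β x) := by
  simpa [pd4, stringPot_eq_rayIntegral, contraction, mul_comm] using
    string_localized_potential_curl_general (Pi.basisFun ℝ (Fin 4)) he
      (fun α β => (hF α β).of_le (mod_cast le_top)) hFc hanti (by simpa [pd4] using hBianchi)
end

section
/- Let s : ℝ³ → ℝ be a compactly supported C¹ function and let γ : [0,1] → ℝ³ be a C¹ path. Then the vector field g_γ(x) = ∫₀¹ s(x − γ(u)) γ'(u) du is differentiable and its divergence satisfies div g_γ(x) = s(x − γ(0)) − s(x − γ(1)) for all x ∈ ℝ³. In particular, if γ is a closed path (γ(0) = γ(1)), then div g_γ = 0. -/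
/-!
Differentiating under the integral sign, the derivative of `g_γ` at `x` is
`∫ γ'(u) ⊗ Ds(x − γ(u)) du`; a dominating function exists because `Ds` is bounded near the compact
set `x − γ([a, b])`. The divergence is the trace of this derivative, and the trace of the rank-one
map `γ'(u) ⊗ Ds(x − γ(u))` is `Ds(x − γ(u)) γ'(u) = −d/du s(x − γ(u))`, so the fundamental theorem
of calculus leaves only the boundary values.
-/

open MeasureTheory

/-- Partial derivative of a function on ℝ³ in the i-th coordinate direction. -/
noncomputable def pd (f : (Fin 3 → ℝ) → ℝ) (i : Fin 3) (x : Fin 3 → ℝ) : ℝ :=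
  fderiv ℝ f x (Pi.single i 1)

/-- Divergence of a vector field on ℝ³: `div v = ∂₁v₁ + ∂₂v₂ + ∂₃v₃`. -/
noncomputable def div3 (v : (Fin 3 → ℝ) → Fin 3 → ℝ) (x : Fin 3 → ℝ) : ℝ :=
  ∑ i, pd (fun y => v y i) i x

/-- The path-smeared vector field `g_γ(x) = ∫₀¹ s(x − γ(u)) γ'(u) du`. -/
noncomputable def pathField (s : (Fin 3 → ℝ) → ℝ) (γ : ℝ → Fin 3 → ℝ)
    (x : Fin 3 → ℝ) : Fin 3 → ℝ :=
  ∫ u in (0:ℝ)..1, s (x - γ u) • deriv γ u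

open Set
open scoped Interval Topology

section Compactness

variable {X Y F : Type*} [TopologicalSpace X] [TopologicalSpace Y] [SeminormedAddCommGroup F]

lemma exists_eventually_forall_mem_norm_lt {f : X → Y → F} (hf : Continuous (Function.uncurry f))
    {K : Set Y} (hK : IsCompact K) (x₀ : X) : ∃ C, ∀ᶠ x in 𝓝 x₀, ∀ y ∈ K, ‖f x y‖ < C := by
  obtain ⟨C, hC⟩ := hK.exists_bound_of_continuousOn (f := f x₀) (hf.uncurry_left x₀).continuousOn
  refine ⟨C + 1, hK.eventually_forall_of_forall_eventually fun y hy ↦ ?_⟩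
  exact hf.norm.continuousAt.eventually_lt_const (lt_add_of_le_of_pos (hC y hy) one_pos)

end Compactness

section Path

variable {E F G : Type*} [NormedAddCommGroup E] [NormedSpace ℝ E] [NormedAddCommGroup F]
  [NormedSpace ℝ F] [NormedAddCommGroup G] [NormedSpace ℝ G] {a b : ℝ}

lemma intervalIntegrable_bilin_of_continuousOn (B : E →L[ℝ] F →L[ℝ] G) {μ : Measure ℝ}
    {f : ℝ → E} {w : ℝ → F} (hf : ContinuousOn f [[a, b]]) (hw : IntervalIntegrable w μ a b) :
    IntervalIntegrable (fun u ↦ B (f u) (w u)) μ a b := by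
  obtain ⟨C, hC⟩ := isCompact_uIcc.exists_bound_of_continuousOn hf
  rw [intervalIntegrable_iff] at hw ⊢
  exact B.integrable_of_bilin_of_bdd_left C
    ((hf.mono uIoc_subset_uIcc).aestronglyMeasurable measurableSet_uIoc)
    (ae_restrict_of_forall_mem measurableSet_uIoc fun u hu ↦ hC u (uIoc_subset_uIcc hu)) hw

lemma integral_fderiv_apply_of_hasDerivAt_off_countable [CompleteSpace F] {f : E → F}
    (hf : ContDiff ℝ 1 f) {γ γ' : ℝ → E} {t : Set ℝ} (ht : t.Countable)
    (hγ : ContinuousOn γ [[a, b]])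
    (hγd : ∀ u ∈ Ioo (min a b) (max a b) \ t, HasDerivAt γ (γ' u) u)
    (hγ' : IntervalIntegrable γ' volume a b) :
    ∫ u in a..b, fderiv ℝ f (γ u) (γ' u) = f (γ b) - f (γ a) :=
  integral_eq_of_hasDerivAt_off_countable (f ∘ γ) _ ht (hf.continuous.comp_continuousOn hγ)
    (fun u hu ↦ (hf.differentiable one_ne_zero (γ u)).hasFDerivAt.comp_hasDerivAt u (hγd u hu))
    (intervalIntegrable_bilin_of_continuousOn (.id ℝ (E →L[ℝ] F))
      ((hf.continuous_fderiv one_ne_zero).comp_continuousOn hγ) hγ')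

/-- The superposition of the translates of `s` along the path `γ`, weighted by `w`. The
path-smeared field `g_γ` is the case where `w` is the derivative of `γ`. -/
noncomputable def smearedField (s : E → ℝ) (γ : ℝ → E) (w : ℝ → F) (a b : ℝ) (x : E) : F :=
  ∫ u in a..b, s (x - γ u) • w u

lemma pathField_eq_smearedField (s : (Fin 3 → ℝ) → ℝ) (γ : ℝ → Fin 3 → ℝ) :
    pathField s γ = smearedField s γ (deriv γ) 0 1 :=
  rfl

variable {s : E → ℝ} {γ : ℝ → E} {w : ℝ → F}

lemma intervalIntegrable_smulRight_fderiv (hs : ContDiff ℝ 1 s) (hγ : ContinuousOn γ [[a, b]])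
    (hw : IntervalIntegrable w volume a b) (x : E) :
    IntervalIntegrable (fun u ↦ (fderiv ℝ s (x - γ u)).smulRight (w u)) volume a b :=
  intervalIntegrable_bilin_of_continuousOn (.smulRightL ℝ E F)
    ((hs.continuous_fderiv one_ne_zero).comp_continuousOn (continuousOn_const.sub hγ)) hw

lemma hasFDerivAt_smearedField (hs : ContDiff ℝ 1 s) (hγ : ContinuousOn γ [[a, b]])
    (hw : IntervalIntegrable w volume a b) (x : E) :
    HasFDerivAt (smearedField s γ w a b)
      (∫ u in a..b, (fderiv ℝ s (x - γ u)).smulRight (w u)) x := by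
  have hint : ∀ y, IntervalIntegrable (fun u ↦ s (y - γ u) • w u) volume a b := fun y ↦
    hw.continuousOn_smul (hs.continuous.comp_continuousOn (continuousOn_const.sub hγ))
  obtain ⟨C, hC⟩ := exists_eventually_forall_mem_norm_lt (f := fun y z ↦ fderiv ℝ s (y - z))
    ((hs.continuous_fderiv one_ne_zero).comp continuous_sub)
    (isCompact_uIcc.image_of_continuousOn hγ) x
  have hbound : ∀ u ∈ Ι a b, ∀ y ∈ {y | ∀ z ∈ γ '' [[a, b]], ‖fderiv ℝ s (y - z)‖ < C},
      ‖(fderiv ℝ s (y - γ u)).smulRight (w u)‖ ≤ C * ‖w u‖ := fun u hu y hy ↦ by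
    rw [ContinuousLinearMap.norm_smulRight_apply]
    gcongr
    exact (hy _ (mem_image_of_mem γ (uIoc_subset_uIcc hu))).le
  have hderiv : ∀ u y, HasFDerivAt (fun y ↦ s (y - γ u) • w u)
      ((fderiv ℝ s (y - γ u)).smulRight (w u)) y := fun u y ↦
    ((hasFDerivAt_comp_sub (γ u)).2
      (hs.differentiable one_ne_zero (y - γ u)).hasFDerivAt).smul_const (w u)
  exact intervalIntegral.hasFDerivAt_integral_of_dominated_of_fderiv_le hC
    (.of_forall fun y ↦ (hint y).def'.aestronglyMeasurable) (hint x)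
    (intervalIntegrable_smulRight_fderiv hs hγ hw x).def'.aestronglyMeasurable
    (.of_forall hbound) (hw.norm.const_mul C) (.of_forall fun u _ y _ ↦ hderiv u y)

end Path

section Divergence

variable {E : Type*} [NormedAddCommGroup E] [NormedSpace ℝ E]

/-- The divergence of a vector field as the trace of its derivative, which needs no choice of
coordinates. It is `0` where the field is not differentiable, and everywhere if `E` is
infinite-dimensional. -/
noncomputable def divergence (v : E → E) (x : E) : ℝ :=
  LinearMap.trace ℝ E (fderiv ℝ v x)

lemma divergence_eq_sum_fderiv {ι : Type*} [Fintype ι] [DecidableEq ι] {v : (ι → ℝ) → ι → ℝ}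
    {x : ι → ℝ} (hv : DifferentiableAt ℝ v x) :
    divergence v x = ∑ i, fderiv ℝ (fun y ↦ v y i) x (Pi.single i 1) := by
  simp [divergence, LinearMap.trace_eq_matrix_trace ℝ (Pi.basisFun ℝ ι), Matrix.trace,
    fderiv_apply hv]

lemma div3_eq_divergence {v : (Fin 3 → ℝ) → Fin 3 → ℝ} {x : Fin 3 → ℝ}
    (hv : DifferentiableAt ℝ v x) : div3 v x = divergence v x :=
  (divergence_eq_sum_fderiv hv).symm

variable [FiniteDimensional ℝ E] {a b : ℝ}

lemma trace_intervalIntegral {μ : Measure ℝ} {A : ℝ → E →L[ℝ] E}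
    (hA : IntervalIntegrable A μ a b) :
    LinearMap.trace ℝ E (∫ u in a..b, A u ∂μ : E →L[ℝ] E) =
      ∫ u in a..b, LinearMap.trace ℝ E (A u) ∂μ :=
  ((LinearMap.trace ℝ E ∘ₗ ContinuousLinearMap.coeLM ℝ).toContinuousLinearMap
    |>.intervalIntegral_comp_comm hA).symm

lemma divergence_smearedField {s : E → ℝ} {γ w : ℝ → E} (hs : ContDiff ℝ 1 s)
    (hγ : ContinuousOn γ [[a, b]]) (hw : IntervalIntegrable w volume a b) (x : E) :
    divergence (smearedField s γ w a b) x = ∫ u in a..b, fderiv ℝ s (x - γ u) (w u) := by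
  rw [divergence, (hasFDerivAt_smearedField hs hγ hw x).fderiv,
    trace_intervalIntegral (intervalIntegrable_smulRight_fderiv hs hγ hw x)]
  exact intervalIntegral.integral_congr fun u _ ↦ LinearMap.trace_smulRight _ _

theorem div_pathField_general {s : E → ℝ} (hs : ContDiff ℝ 1 s) {γ γ' : ℝ → E} {t : Set ℝ}
    (ht : t.Countable) (hγ : ContinuousOn γ [[a, b]])
    (hγd : ∀ u ∈ Ioo (min a b) (max a b) \ t, HasDerivAt γ (γ' u) u)
    (hγ' : IntervalIntegrable γ' volume a b) :
    Differentiable ℝ (smearedField s γ γ' a b) ∧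
    (∀ x, divergence (smearedField s γ γ' a b) x = s (x - γ a) - s (x - γ b)) ∧
    (γ a = γ b → ∀ x, divergence (smearedField s γ γ' a b) x = 0) := by
  have hdiv : ∀ x, divergence (smearedField s γ γ' a b) x = s (x - γ a) - s (x - γ b) := fun x ↦
    calc
      divergence (smearedField s γ γ' a b) x
      _ = -∫ u in a..b, fderiv ℝ s (x - γ u) (-γ' u) := by
        simp only [divergence_smearedField hs hγ hγ', map_neg, intervalIntegral.integral_neg,
          neg_neg]
      _ = -(s (x - γ b) - s (x - γ a)) := by
        rw [integral_fderiv_apply_of_hasDerivAt_off_countable hs ht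
          (γ := fun u ↦ x - γ u) (continuousOn_const.sub hγ)
          (fun u hu ↦ (hγd u hu).const_sub x) hγ'.neg]
      _ = s (x - γ a) - s (x - γ b) := neg_sub _ _
  exact ⟨fun x ↦ (hasFDerivAt_smearedField hs hγ hγ' x).differentiableAt, hdiv,
    fun hclosed x ↦ by rw [hdiv, hclosed, sub_self]⟩

end Divergence

/-- For a compactly supported C¹ function `s` and a C¹ path `γ`, the path-smeared
field `g_γ` is differentiable with `div g_γ(x) = s(x − γ(0)) − s(x − γ(1))`;
in particular `div g_γ = 0` for closed paths. -/
theorem div_pathField (s : (Fin 3 → ℝ) → ℝ) (hs : ContDiff ℝ 1 s)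
    (hsc : HasCompactSupport s) (γ : ℝ → Fin 3 → ℝ) (hγ : ContDiff ℝ 1 γ) :
    Differentiable ℝ (pathField s γ) ∧
    (∀ x, div3 (pathField s γ) x = s (x - γ 0) - s (x - γ 1)) ∧
    (γ 0 = γ 1 → ∀ x, div3 (pathField s γ) x = 0) := by
  obtain ⟨hd, hdiv⟩ := div_pathField_general (a := 0) (b := 1) hs countable_empty
    hγ.continuous.continuousOn (fun u _ ↦ (hγ.differentiable one_ne_zero u).hasDerivAt)
    ((hγ.continuous_deriv le_rfl).intervalIntegrable 0 1)
  exact ⟨hd, by simpa only [pathField_eq_smearedField, div3_eq_divergence (hd _)] using hdiv⟩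
end

section
/- Let s : ℝ³ → ℝ be a compactly supported C¹ function, let B = [a₁,b₁] × [a₂,b₂] × [a₃,b₃] ⊂ ℝ³ be a rectangular box, and define s_B(x) = ∫_B s(x − y) dy. Then s_B is differentiable and, for i = 1 (and analogously for i = 2, 3), ∂₁ s_B(x) = ∫_{[a₂,b₂]×[a₃,b₃]} ( s(x − (a₁, y₂, y₃)) − s(x − (b₁, y₂, y₃)) ) dy₂ dy₃; that is, the gradient of the mollified indicator of the box equals the difference of the mollifier integrated over the corresponding opposite faces of the box (the inward-directed boundary surface integral). -/
/-!
Since `s` is `C¹` and the box is compact, one may differentiate under the integral sign, and the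
derivative of `s_B` at `x` is `∫_B (fderiv ℝ s) (x - y) dy`. Evaluated at a basis vector `eᵢ`, the
integrand is the divergence in `y` of the vector field `-s (x - y) eᵢ`, whose flux through the
boundary of the box only sees the two faces orthogonal to `eᵢ`.
-/

open MeasureTheory

/-- The box-mollified function `s_B(x) = ∫_B s(x − y) dy` for the rectangular box
`B = [a₁,b₁] × [a₂,b₂] × [a₃,b₃]`. -/
noncomputable def boxMoll (s : (Fin 3 → ℝ) → ℝ) (a b : Fin 3 → ℝ) (x : Fin 3 → ℝ) : ℝ :=
  ∫ y in Set.Icc a b, s (x - y)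

open Filter Set
open scoped Topology

theorem hasFDerivAt_setIntegral_of_isCompact {𝕜 H E α : Type*} [RCLike 𝕜]
    [NormedAddCommGroup H] [NormedSpace 𝕜 H] [NormedAddCommGroup E] [NormedSpace ℝ E]
    [NormedSpace 𝕜 E] [TopologicalSpace α] [TopologicalSpace.PseudoMetrizableSpace α]
    [MeasurableSpace α] [OpensMeasurableSpace α] {μ : Measure α} [IsFiniteMeasureOnCompacts μ]
    {K : Set α} (hK : IsCompact K) (hKm : MeasurableSet K)
    {F : H → α → E} {F' : H → α → H →L[𝕜] E} {x₀ : H}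
    (hF : ∀ᶠ x in 𝓝 x₀, ContinuousOn (F x) K)
    (hF' : ∀ y ∈ K, ContinuousAt ↿F' (x₀, y))
    (hdiff : ∀ᶠ x in 𝓝 x₀, ∀ y ∈ K, HasFDerivAt (F · y) (F' x y) x) :
    HasFDerivAt (fun x => ∫ y in K, F x y ∂μ) (∫ y in K, F' x₀ y ∂μ) x₀ := by
  have hF'₀ : ContinuousOn (F' x₀) K := fun y hy =>
    ((hF' y hy).comp (f := fun z => (x₀, z)) (by fun_prop)).continuousWithinAt
  obtain ⟨C, hC⟩ := hK.exists_bound_of_continuousOn hF'₀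
  have hbound : ∀ᶠ x in 𝓝 x₀, ∀ y ∈ K, ‖F' x y‖ ≤ C + 1 :=
    hK.eventually_forall_of_forall_eventually fun y hy =>
      ((hF' y hy).norm.eventually_lt_const ((hC y hy).trans_lt (lt_add_one C))).mono
        fun _ => le_of_lt
  refine hasFDerivAt_integral_of_dominated_of_fderiv_le (bound := fun _ => C + 1)
    (hbound.and hdiff)
    (hF.mono fun _ hx => hx.aestronglyMeasurable_of_isCompact hK hKm)
    (hF.self_of_nhds.integrableOn_compact' hK hKm)
    (hF'₀.aestronglyMeasurable_of_isCompact hK hKm)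
    ?_ (continuousOn_const.integrableOn_compact' hK hKm) ?_
  · exact ae_restrict_of_forall_mem hKm fun y hy x hx => hx.1 y hy
  · exact ae_restrict_of_forall_mem hKm fun y hy x hx => hx.2 y hy

theorem hasFDerivAt_setIntegral_comp_sub {H E : Type*} [NormedAddCommGroup H] [NormedSpace ℝ H]
    [MeasurableSpace H] [OpensMeasurableSpace H] [NormedAddCommGroup E] [NormedSpace ℝ E]
    {μ : Measure H} [IsFiniteMeasureOnCompacts μ] {K : Set H} (hK : IsCompact K)
    {s : H → E} (hs : ContDiff ℝ 1 s) (x : H) :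
    HasFDerivAt (fun x => ∫ y in K, s (x - y) ∂μ) (∫ y in K, fderiv ℝ s (x - y) ∂μ) x := by
  have hs' : Continuous (fderiv ℝ s) := hs.continuous_fderiv one_ne_zero
  refine hasFDerivAt_setIntegral_of_isCompact hK hK.measurableSet
    (F' := fun x y => fderiv ℝ s (x - y))
    (.of_forall fun x => (hs.continuous.comp (continuous_sub_left x)).continuousOn)
    (fun y _ => (hs'.comp continuous_sub).continuousAt)
    (.of_forall fun x y _ => (hasFDerivAt_comp_sub y).2 ?_)
  exact (hs.differentiable one_ne_zero (x - y)).hasFDerivAt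

section Box

variable {E : Type*} [NormedAddCommGroup E] [NormedSpace ℝ E]

theorem integral_apply_single_of_hasFDerivAt_off_countable {n : ℕ} {a b : Fin (n + 1) → ℝ}
    (hab : a ≤ b) {f : (Fin (n + 1) → ℝ) → E} {f' : (Fin (n + 1) → ℝ) → (Fin (n + 1) → ℝ) →L[ℝ] E}
    {t : Set (Fin (n + 1) → ℝ)} (ht : t.Countable) (i : Fin (n + 1))
    (hf : ContinuousOn f (Icc a b))
    (hf' : ∀ y ∈ (univ.pi fun j => Ioo (a j) (b j)) \ t, HasFDerivAt f (f' y) y)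
    (hint : IntegrableOn (fun y => f' y (Pi.single i 1)) (Icc a b)) :
    ∫ y in Icc a b, f' y (Pi.single i 1) =
      (∫ z in Icc (a ∘ i.succAbove) (b ∘ i.succAbove), f (i.insertNth (b i) z)) -
        ∫ z in Icc (a ∘ i.succAbove) (b ∘ i.succAbove), f (i.insertNth (a i) z) := by
  let v : Fin (n + 1) → (Fin (n + 1) → ℝ) → E := Pi.single i f
  let v' : Fin (n + 1) → (Fin (n + 1) → ℝ) → (Fin (n + 1) → ℝ) →L[ℝ] E := Pi.single i f'
  have hv_self : v i = f := by simp [v]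
  have hv_of_ne {j} (hj : j ≠ i) : v j = 0 := by simp [v, hj]
  have hv'_self : v' i = f' := by simp [v']
  have hv'_of_ne {j} (hj : j ≠ i) : v' j = 0 := by simp [v', hj]
  have hdiv (y) : ∑ j, v' j y (Pi.single j 1) = f' y (Pi.single i 1) := by
    rw [Fintype.sum_eq_single i fun j hj => by simp [hv'_of_ne hj], hv'_self]
  have hflux := integral_divergence_of_hasFDerivAt_off_countable' a b hab v v' t ht ?_ ?_ ?_
  · simp only [hdiv] at hflux
    rw [hflux, Fintype.sum_eq_single i fun j hj => by simp [hv_of_ne hj], hv_self]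
  · intro j
    obtain rfl | hj := eq_or_ne j i
    · rwa [hv_self]
    · rw [hv_of_ne hj]
      exact continuousOn_const
  · intro y hy j
    obtain rfl | hj := eq_or_ne j i
    · rw [hv_self, hv'_self]
      exact hf' y hy
    · rw [hv_of_ne hj, hv'_of_ne hj]
      exact hasFDerivAt_const 0 y
  · simpa only [hdiv] using hint

theorem setIntegral_Icc_fin_two {g : (Fin 2 → ℝ) → E} {c d : Fin 2 → ℝ} (hcd : c ≤ d)
    (hg : IntegrableOn g (Icc c d)) :
    ∫ y in Icc c d, g y = ∫ u in (c 0)..(d 0), ∫ v in (c 1)..(d 1), g ![u, v] := by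
  have hmp := (volume_preserving_finTwoArrow ℝ).symm
  have hemb := (MeasurableEquiv.finTwoArrow (α := ℝ)).symm.measurableEmbedding
  have hpre : (MeasurableEquiv.finTwoArrow (α := ℝ)).symm ⁻¹' Icc c d =
      Icc (c 0) (d 0) ×ˢ Icc (c 1) (d 1) := by
    rw [Icc_prod_Icc]
    exact (OrderIso.finTwoArrowIso ℝ).symm.preimage_Icc c d
  have hg' : IntegrableOn (fun p : ℝ × ℝ => g ![p.1, p.2])
      (Icc (c 0) (d 0) ×ˢ Icc (c 1) (d 1)) := by
    rw [← hpre]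
    exact (hmp.integrableOn_comp_preimage hemb).2 hg
  calc ∫ y in Icc c d, g y
      = ∫ p in Icc (c 0) (d 0) ×ˢ Icc (c 1) (d 1), g ![p.1, p.2] := by
        rw [← hmp.setIntegral_preimage_emb hemb, hpre]
        rfl
    _ = ∫ u in Icc (c 0) (d 0), ∫ v in Icc (c 1) (d 1), g ![u, v] := setIntegral_prod _ hg'
    _ = ∫ u in (c 0)..(d 0), ∫ v in (c 1)..(d 1), g ![u, v] := by
        simp only [intervalIntegral.integral_of_le (hcd _), integral_Icc_eq_integral_Ioc]

theorem grad_boxMoll_general [CompleteSpace E] {n : ℕ} {s : (Fin (n + 1) → ℝ) → E}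
    (hs : ContDiff ℝ 1 s) {a b : Fin (n + 1) → ℝ} (hab : a ≤ b) :
    Differentiable ℝ (fun x => ∫ y in Icc a b, s (x - y)) ∧
    ∀ (i : Fin (n + 1)) (x : Fin (n + 1) → ℝ),
      fderiv ℝ (fun x => ∫ y in Icc a b, s (x - y)) x (Pi.single i 1) =
        ∫ z in Icc (a ∘ i.succAbove) (b ∘ i.succAbove),
          (s (x - i.insertNth (a i) z) - s (x - i.insertNth (b i) z)) := by
  have hderiv := hasFDerivAt_setIntegral_comp_sub (μ := volume) (isCompact_Icc (a := a) (b := b)) hs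
  refine ⟨fun x => (hderiv x).differentiableAt, fun i x => ?_⟩
  have hs_sub : Continuous fun y => s (x - y) := by fun_prop
  have hs'_sub : Continuous fun y => fderiv ℝ s (x - y) :=
    (hs.continuous_fderiv one_ne_zero).comp (continuous_sub_left x)
  have hderiv_sub (y : Fin (n + 1) → ℝ) :
      HasFDerivAt (fun y => s (x - y)) (-fderiv ℝ s (x - y)) y := by
    simpa using! (hs.differentiable one_ne_zero (x - y)).hasFDerivAt.comp y
      ((hasFDerivAt_id y).const_sub x)
  have hface (t : ℝ) : IntegrableOn (fun z : Fin n → ℝ => s (x - i.insertNth t z))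
      (Icc (a ∘ i.succAbove) (b ∘ i.succAbove)) :=
    (hs_sub.comp (continuous_const.finInsertNth i continuous_id)).continuousOn.integrableOn_Icc
  have hflux := integral_apply_single_of_hasFDerivAt_off_countable hab countable_empty i
    hs_sub.continuousOn (fun y _ => hderiv_sub y)
    (hs'_sub.neg.clm_apply continuous_const).continuousOn.integrableOn_Icc
  calc fderiv ℝ (fun x => ∫ y in Icc a b, s (x - y)) x (Pi.single i 1)
      = ∫ y in Icc a b, fderiv ℝ s (x - y) (Pi.single i 1) := by
        rw [(hderiv x).fderiv,
          ContinuousLinearMap.integral_apply hs'_sub.continuousOn.integrableOn_Icc]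
    _ = -∫ y in Icc a b, (-fderiv ℝ s (x - y)) (Pi.single i 1) := by
        simp only [neg_apply, integral_neg, neg_neg]
    _ = (∫ z in Icc (a ∘ i.succAbove) (b ∘ i.succAbove), s (x - i.insertNth (a i) z)) -
          ∫ z in Icc (a ∘ i.succAbove) (b ∘ i.succAbove), s (x - i.insertNth (b i) z) := by
        rw [hflux, neg_sub]
    _ = ∫ z in Icc (a ∘ i.succAbove) (b ∘ i.succAbove),
          (s (x - i.insertNth (a i) z) - s (x - i.insertNth (b i) z)) :=
        (integral_sub (hface _) (hface _)).symm

end Box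

/-- The mollified indicator of a box is differentiable and its first partial derivative
is the difference of the mollifier integrated over the two opposite faces
`{a₁} × [a₂,b₂] × [a₃,b₃]` and `{b₁} × [a₂,b₂] × [a₃,b₃]` (the inward-directed boundary
surface integral); the analogous statements hold for the other coordinates. -/
theorem grad_boxMoll (s : (Fin 3 → ℝ) → ℝ) (hs : ContDiff ℝ 1 s)
    (hsc : HasCompactSupport s) (a b : Fin 3 → ℝ) (hab : ∀ i, a i ≤ b i) :
    Differentiable ℝ (boxMoll s a b) ∧
    (∀ x, pd (boxMoll s a b) 0 x =
      ∫ y₂ in (a 1)..(b 1), ∫ y₃ in (a 2)..(b 2),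
        (s (x - ![a 0, y₂, y₃]) - s (x - ![b 0, y₂, y₃]))) := by
  obtain ⟨hdiff, hgrad⟩ := grad_boxMoll_general hs hab
  refine ⟨hdiff, fun x => (hgrad 0 x).trans ?_⟩
  refine (setIntegral_Icc_fin_two (fun j => hab _) (Continuous.integrableOn_Icc ?_)).trans ?_
  · fun_prop
  · simp only [Fin.insertNth_zero']
    rfl
end

section
/- Let s : ℝ³ → ℝ be a compactly supported C¹ function, γ : [0,1] → ℝ³ a C¹ path, and g_γ(x) = ∫₀¹ s(x − γ(u)) γ'(u) du. Then for every compactly supported C¹ function s' : ℝ³ → ℝ, ∫_{ℝ³} g_γ(x) · (grad s')(x) dx = ∫_{ℝ³} s(x − γ(1)) s'(x) dx − ∫_{ℝ³} s(x − γ(0)) s'(x) dx. -/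
open MeasureTheory

/-- Gradient of a scalar function on ℝ³. -/
noncomputable def grad3 (h : (Fin 3 → ℝ) → ℝ) (x : Fin 3 → ℝ) : Fin 3 → ℝ :=
  fun i => pd h i x

/-- Euclidean inner product on ℝ³. -/
def dot3 (v w : Fin 3 → ℝ) : ℝ := ∑ i, v i * w i

open scoped Convolution Interval

theorem locallyIntegrable_comp_homeomorph {X Y F : Type*} [TopologicalSpace X] [MeasurableSpace X]
    [BorelSpace X] [TopologicalSpace Y] [MeasurableSpace Y] [BorelSpace Y] [NormedAddCommGroup F]
    {μ : Measure X} {ν : Measure Y} {f : Y → F} (hf : LocallyIntegrable f ν) (e : X ≃ₜ Y)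
    (he : MeasurePreserving e μ ν) : LocallyIntegrable (fun x => f (e x)) μ := by
  rw [← he.map_eq] at hf
  exact (locallyIntegrable_map_homeomorph e).1 hf

theorem quasiMeasurePreserving_snd_sub_comp_fst {X G : Type*} [MeasurableSpace X] [AddGroup G]
    [MeasurableSpace G] [MeasurableAdd G] [MeasurableSub₂ G] {ν : Measure X} {μ : Measure G}
    [SFinite μ] [μ.IsAddRightInvariant] {γ : X → G} (hγ : Measurable γ) :
    Measure.QuasiMeasurePreserving (fun p : X × G => p.2 - γ p.1) (ν.prod μ) μ :=
  QuasiMeasurePreserving.prod_of_right (measurable_snd.sub (hγ.comp measurable_fst))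
    (.of_forall fun u => (measurePreserving_sub_right μ (γ u)).quasiMeasurePreserving)

/-- The cross-correlation `v ↦ ∫ s(x − v) f(x) dx` of a scalar function `s` with a vector-valued
function `f`. As a function of the endpoint of the path it is the potential whose increment
is the pairing of the path-smeared field with the derivative of `f`. -/
noncomputable def crossCorrelation {E F : Type*} [Sub E] [MeasurableSpace E]
    [NormedAddCommGroup F] [NormedSpace ℝ F] (μ : Measure E) (s : E → ℝ) (f : E → F) (v : E) : F :=
  ∫ x, s (x - v) • f x ∂μ

theorem crossCorrelation_eq_convolution {E F : Type*} [AddGroup E] [MeasurableSpace E]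
    [NormedAddCommGroup F] [NormedSpace ℝ F] (μ : Measure E) (s : E → ℝ) (f : E → F) :
    crossCorrelation μ s f = f ⋆[(ContinuousLinearMap.lsmul ℝ ℝ).flip, μ] fun y => s (-y) := by
  ext v
  simp [crossCorrelation, convolution_def]

section TopologicalAddGroup

variable {E F : Type*} [AddGroup E] [TopologicalSpace E] [IsTopologicalAddGroup E]
  [MeasurableSpace E] [BorelSpace E] [NormedAddCommGroup F]
  {μ : Measure E} {s : E → ℝ} {f : E → F}

theorem locallyIntegrable_comp_neg [μ.IsNegInvariant] (hf : LocallyIntegrable f μ) :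
    LocallyIntegrable (fun x => f (-x)) μ :=
  locallyIntegrable_comp_homeomorph hf (Homeomorph.neg E) (Measure.measurePreserving_neg μ)

theorem locallyIntegrable_comp_sub_right [μ.IsAddRightInvariant] (hf : LocallyIntegrable f μ)
    (v : E) : LocallyIntegrable (fun x => f (x - v)) μ :=
  locallyIntegrable_comp_homeomorph hf (Homeomorph.subRight v) (measurePreserving_sub_right μ v)

variable [NormedSpace ℝ F]

theorem integrable_comp_sub_smul [T2Space E] [μ.IsAddRightInvariant] (hs : LocallyIntegrable s μ)
    (hf : Continuous f) (hfc : HasCompactSupport f) (v : E) :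
    Integrable (fun x => s (x - v) • f x) μ :=
  (locallyIntegrable_comp_sub_right hs v).integrable_smul_right_of_hasCompactSupport hf hfc

theorem crossCorrelation_apply [T2Space E] [μ.IsAddRightInvariant] {G : Type*}
    [NormedAddCommGroup G] [NormedSpace ℝ G] {A : E → G →L[ℝ] F}
    (hs : LocallyIntegrable s μ) (hA : Continuous A) (hAc : HasCompactSupport A) (v : E) (w : G) :
    crossCorrelation μ s A v w = ∫ x, s (x - v) • A x w ∂μ :=
  ContinuousLinearMap.integral_apply (integrable_comp_sub_smul hs hA hAc v) w

end TopologicalAddGroup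

theorem continuous_crossCorrelation {E F : Type*} [AddCommGroup E] [TopologicalSpace E]
    [IsTopologicalAddGroup E] [MeasurableSpace E] [BorelSpace E] [NormedAddCommGroup F]
    [NormedSpace ℝ F] {μ : Measure E} [μ.IsAddLeftInvariant] [μ.IsNegInvariant] {s : E → ℝ}
    {f : E → F} (hs : LocallyIntegrable s μ) (hf : Continuous f) (hfc : HasCompactSupport f) :
    Continuous (crossCorrelation μ s f) := by
  rw [crossCorrelation_eq_convolution]
  exact hfc.continuous_convolution_left _ hf (locallyIntegrable_comp_neg hs)

section FiniteDimensional

variable {E F : Type*} [NormedAddCommGroup E] [NormedSpace ℝ E] [FiniteDimensional ℝ E]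
  [MeasurableSpace E] [BorelSpace E] [NormedAddCommGroup F] [NormedSpace ℝ F]
  {μ : Measure E} [μ.IsAddHaarMeasure] {s : E → ℝ} {f : E → F} {γ : ℝ → E}

theorem hasFDerivAt_crossCorrelation (hs : LocallyIntegrable s μ) (hf : ContDiff ℝ 1 f)
    (hfc : HasCompactSupport f) (v : E) :
    HasFDerivAt (crossCorrelation μ s f) (crossCorrelation μ s (fderiv ℝ f) v) v := by
  simp only [crossCorrelation_eq_convolution]
  exact hfc.hasFDerivAt_convolution_left _ hf (locallyIntegrable_comp_neg hs) v

theorem integrable_prod_comp_sub_smul (hs : LocallyIntegrable s μ) (hf : Continuous f)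
    (hfc : HasCompactSupport f) (hγ : Continuous γ) (a b : ℝ) :
    Integrable (fun p : ℝ × E => s (p.2 - γ p.1) • f p.2)
      ((volume.restrict (Ι a b)).prod μ) := by
  have hmeas : AEStronglyMeasurable (fun p : ℝ × E => s (p.2 - γ p.1) • f p.2)
      ((volume.restrict (Ι a b)).prod μ) :=
    (hs.aestronglyMeasurable.comp_quasiMeasurePreserving
      (quasiMeasurePreserving_snd_sub_comp_fst hγ.measurable)).smul
      (hf.comp continuous_snd).aestronglyMeasurable
  -- The `L¹` norms of the slices form the cross-correlation of `‖s‖` and `‖f‖` along `γ`.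
  have hnorm : Continuous fun u => ∫ x, ‖s (x - γ u) • f x‖ ∂μ := by
    simp only [norm_smul]
    have hs_norm : LocallyIntegrable (fun x => ‖s x‖) μ :=
      hs.mono hs.aestronglyMeasurable.norm (.of_forall fun x => (norm_norm (s x)).le)
    exact (continuous_crossCorrelation hs_norm hf.norm hfc.norm).comp hγ
  exact (integrable_prod_iff hmeas).2
    ⟨.of_forall fun u => integrable_comp_sub_smul hs hf hfc (γ u), hnorm.integrableOn_uIoc⟩

variable {G : Type*} [NormedAddCommGroup G] [NormedSpace ℝ G] {A : E → G →L[ℝ] F} {w : ℝ → G}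

theorem integrable_prod_comp_sub_smul_apply (hs : LocallyIntegrable s μ) (hA : Continuous A)
    (hAc : HasCompactSupport A) (hγ : Continuous γ) (hw : Continuous w) (a b : ℝ) :
    Integrable (fun p : ℝ × E => s (p.2 - γ p.1) • A p.2 (w p.1))
      ((volume.restrict (Ι a b)).prod μ) := by
  obtain ⟨C, hC⟩ := isCompact_uIcc.exists_bound_of_continuousOn (s := [[a, b]]) hw.continuousOn
  have hbound : ∀ᵐ p ∂(volume.restrict (Ι a b)).prod μ, ‖w p.1‖ ≤ C :=
    Measure.quasiMeasurePreserving_fst.ae <|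
      ae_restrict_of_forall_mem measurableSet_uIoc fun u hu => hC u (Set.uIoc_subset_uIcc hu)
  exact (ContinuousLinearMap.id ℝ (G →L[ℝ] F)).integrable_of_bilin_of_bdd_right C
    (integrable_prod_comp_sub_smul hs hA hAc hγ a b)
    (hw.comp continuous_fst).aestronglyMeasurable hbound

theorem ae_apply_intervalIntegral_comp_sub_smul [CompleteSpace G] [CompleteSpace F]
    (hs : LocallyIntegrable s μ) (hA : Continuous A) (hAc : HasCompactSupport A)
    (hγ : Continuous γ) (hw : Continuous w) (a b : ℝ) :
    ∀ᵐ x ∂μ, A x (∫ u in a..b, s (x - γ u) • w u) = ∫ u in a..b, s (x - γ u) • A x (w u) := by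
  filter_upwards [(integrable_prod_comp_sub_smul hs hA hAc hγ a b).prod_left_ae] with x hx
  by_cases hAx : A x = 0
  · simp [hAx]
  have hsx : IntervalIntegrable (fun u => s (x - γ u)) volume a b :=
    intervalIntegrable_iff.2 ((integrable_smul_const hAx).1 hx)
  simpa using
    ((A x).intervalIntegral_comp_comm (hsx.smul_continuousOn hw.continuousOn)).symm

theorem integral_apply_intervalIntegral_comp_sub_smul [CompleteSpace G] [CompleteSpace F]
    (hs : LocallyIntegrable s μ) (hA : Continuous A) (hAc : HasCompactSupport A)
    (hγ : Continuous γ) (hw : Continuous w) (a b : ℝ) :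
    ∫ x, A x (∫ u in a..b, s (x - γ u) • w u) ∂μ =
      ∫ u in a..b, crossCorrelation μ s A (γ u) (w u) := by
  calc ∫ x, A x (∫ u in a..b, s (x - γ u) • w u) ∂μ
      = ∫ x, (∫ u in a..b, s (x - γ u) • A x (w u)) ∂μ :=
        integral_congr_ae (ae_apply_intervalIntegral_comp_sub_smul hs hA hAc hγ hw a b)
    _ = ∫ u in a..b, (∫ x, s (x - γ u) • A x (w u) ∂μ) :=
        (intervalIntegral_integral_swap
          (integrable_prod_comp_sub_smul_apply hs hA hAc hγ hw a b)).symm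
    _ = ∫ u in a..b, crossCorrelation μ s A (γ u) (w u) := by
        simp only [crossCorrelation_apply hs hA hAc]

theorem intervalIntegral_crossCorrelation_fderiv_apply_deriv [CompleteSpace F]
    (hs : LocallyIntegrable s μ) (hf : ContDiff ℝ 1 f) (hfc : HasCompactSupport f)
    (hγ : ContDiff ℝ 1 γ) (a b : ℝ) :
    ∫ u in a..b, crossCorrelation μ s (fderiv ℝ f) (γ u) (deriv γ u) =
      crossCorrelation μ s f (γ b) - crossCorrelation μ s f (γ a) := by
  have hderiv (u : ℝ) : HasDerivAt (fun t => crossCorrelation μ s f (γ t))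
      (crossCorrelation μ s (fderiv ℝ f) (γ u) (deriv γ u)) u :=
    (hasFDerivAt_crossCorrelation hs hf hfc (γ u)).comp_hasDerivAt u
      (hγ.differentiable one_ne_zero u).hasDerivAt
  have hcont : Continuous fun u => crossCorrelation μ s (fderiv ℝ f) (γ u) (deriv γ u) :=
    ((continuous_crossCorrelation hs (hf.continuous_fderiv one_ne_zero)
      (hfc.fderiv ℝ)).comp hγ.continuous).clm_apply hγ.continuous_deriv_one
  exact intervalIntegral.integral_eq_sub_of_hasDerivAt (fun u _ => hderiv u)
    (hcont.intervalIntegrable a b)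

theorem pathField_dot_grad_general [CompleteSpace F]
    (hs : LocallyIntegrable s μ) (hf : ContDiff ℝ 1 f) (hfc : HasCompactSupport f)
    (hγ : ContDiff ℝ 1 γ) (a b : ℝ) :
    ∫ x, fderiv ℝ f x (∫ u in a..b, s (x - γ u) • deriv γ u) ∂μ =
      (∫ x, s (x - γ b) • f x ∂μ) - ∫ x, s (x - γ a) • f x ∂μ :=
  have := FiniteDimensional.complete ℝ E
  (integral_apply_intervalIntegral_comp_sub_smul hs (hf.continuous_fderiv one_ne_zero)
    (hfc.fderiv ℝ) hγ.continuous hγ.continuous_deriv_one a b).trans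
    (intervalIntegral_crossCorrelation_fderiv_apply_deriv hs hf hfc hγ a b)

end FiniteDimensional

theorem dot3_grad3 (f : (Fin 3 → ℝ) → ℝ) (x v : Fin 3 → ℝ) :
    dot3 v (grad3 f x) = fderiv ℝ f x v := by
  conv_rhs => rw [pi_eq_sum_univ' v]
  simp [dot3, grad3, pd]

/-- Pairing the path-smeared field `g_γ` with a gradient picks out the (smeared)
endpoint contributions of the path. -/
theorem pathField_dot_grad (s : (Fin 3 → ℝ) → ℝ) (hs : ContDiff ℝ 1 s)
    (hsc : HasCompactSupport s) (γ : ℝ → Fin 3 → ℝ) (hγ : ContDiff ℝ 1 γ)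
    (s' : (Fin 3 → ℝ) → ℝ) (hs' : ContDiff ℝ 1 s') (hs'c : HasCompactSupport s') :
    ∫ x, dot3 (pathField s γ x) (grad3 s' x) =
      (∫ x, s (x - γ 1) * s' x) - ∫ x, s (x - γ 0) * s' x := by
  simpa only [dot3_grad3, pathField, smul_eq_mul] using
    pathField_dot_grad_general (μ := volume) hs.continuous.locallyIntegrable hs' hs'c hγ 0 1
end

section
/- Let x₁, x₂ ∈ ℝ³, let γ₀ : [0,1] → ℝ³ be a smooth path with γ₀(0) = x₁, γ₀(1) = x₂, satisfying |γ₀(u) − xᵢ| ≥ R·u(1−u) for all u ∈ (0,1), i = 1,2, for some R > 0. Let s : ℝ³ → ℝ be smooth with supp s ⊆ closedBall(0, R') for some R' < R. For 0 < ε < 1/2 define b_ε : ℝ³ → ℝ³ by b_ε(x) = ∫_ε^{1−ε} (u(1−u))^{−3} s( (x − γ₀(u)) / (u(1−u)) ) · ( γ₀'(u) + (1−2u)(x − γ₀(u))/(u(1−u)) ) du. Then b_ε is a smooth compactly supported vector field, and there are open neighborhoods of x₁ and of x₂ on which b_ε vanishes identically. -/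
/-!
On `[ε, 1 - ε]` the weight `u (1 - u)` does not vanish, so the integrand of `bridgeField` is jointly
smooth in `(x, u)` there, and differentiating under the integral sign makes the field smooth.

A nonzero value at `x` forces some `u ∈ [ε, 1 - ε]` with `(x - γ₀ u) / (u (1 - u))` in the support
of `s`, so `x` lies in the compact tube formed by the closed balls of radius `R' u (1 - u)` around
`γ₀ u`. The separation hypothesis and `R' < R` put both endpoints outside this tube, and its
complement is open.
-/

open MeasureTheory

/-- ℝ³ with the Euclidean norm. -/
abbrev E3 := EuclideanSpace ℝ (Fin 3)

/-- The approximating gauge-bridge field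
`b_ε(x) = ∫_ε^{1−ε} (u(1−u))⁻³ s((x − γ₀(u))/(u(1−u)))
            (γ₀'(u) + (1−2u)(x − γ₀(u))/(u(1−u))) du`. -/
noncomputable def bridgeField (γ₀ : ℝ → E3) (s : E3 → ℝ) (ε : ℝ) (x : E3) : E3 :=
  ∫ u in ε..(1 - ε),
    (s ((u * (1 - u))⁻¹ • (x - γ₀ u)) / (u * (1 - u)) ^ 3) •
      (deriv γ₀ u + ((1 - 2 * u) * (u * (1 - u))⁻¹) • (x - γ₀ u))

open Filter Function Metric Set Topology
open scoped ContDiff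

universe u v

section ParametricIntegral

variable {E : Type u} [NormedAddCommGroup E] [NormedSpace ℝ E]
  {V : Type v} [NormedAddCommGroup V] [NormedSpace ℝ V]
  {a b : ℝ} {μ : Measure ℝ} [IsLocallyFiniteMeasure μ]

theorem continuousOn_curry_right {X Y Z : Type*} [TopologicalSpace X] [TopologicalSpace Y]
    [TopologicalSpace Z] {F : X × Y → Z} {x : X} {K : Set Y}
    (hF : ∀ y ∈ K, ContinuousAt F (x, y)) : ContinuousOn (fun y => F (x, y)) K :=
  continuousOn_of_forall_continuousAt fun y hy => (hF y hy).comp' (by fun_prop)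

theorem exists_eventually_forall_norm_le {X Y Z : Type*} [TopologicalSpace X] [TopologicalSpace Y]
    [SeminormedAddCommGroup Z] {F : X × Y → Z} {x₀ : X} {K : Set Y} (hK : IsCompact K)
    (hF : ∀ y ∈ K, ContinuousAt F (x₀, y)) :
    ∃ C, ∀ᶠ x in 𝓝 x₀, ∀ y ∈ K, ‖F (x, y)‖ ≤ C := by
  obtain ⟨C, hC⟩ := hK.exists_bound_of_continuousOn (continuousOn_curry_right hF)
  exact ⟨C + 1, hK.eventually_forall_of_forall_eventually fun y hy =>
    (hF y hy).norm.eventually_le_const ((hC y hy).trans_lt (lt_add_one C))⟩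

theorem continuousAt_intervalIntegral {X : Type*} [TopologicalSpace X]
    [FirstCountableTopology X] {F : X × ℝ → V} {x₀ : X}
    (hF : ∀ t ∈ uIcc a b, ∀ᶠ p in 𝓝 (x₀, t), ContinuousAt F p) :
    ContinuousAt (fun x => ∫ t in a..b, F (x, t) ∂μ) x₀ := by
  have hF₀ : ∀ t ∈ uIcc a b, ContinuousAt F (x₀, t) := fun t ht => (hF t ht).self_of_nhds
  have hnear : ∀ᶠ x in 𝓝 x₀, ∀ t ∈ uIcc a b, ContinuousAt F (x, t) :=
    isCompact_uIcc.eventually_forall_of_forall_eventually hF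
  obtain ⟨C, hC⟩ := exists_eventually_forall_norm_le isCompact_uIcc hF₀
  refine intervalIntegral.continuousAt_of_dominated_interval (bound := fun _ => C)
    ?meas ?bound intervalIntegrable_const ?cont
  case meas =>
    filter_upwards [hnear] with x hx
    exact ((continuousOn_curry_right hx).mono uIoc_subset_uIcc).aestronglyMeasurable
      measurableSet_uIoc
  case bound =>
    filter_upwards [hC] with x hx
    exact .of_forall fun t ht => hx t (uIoc_subset_uIcc ht)
  case cont =>
    refine .of_forall fun t ht => ?_
    exact (hF₀ t (uIoc_subset_uIcc ht)).comp' (f := fun x => (x, t)) (by fun_prop)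

theorem eventually_forall_contDiffAt {G : Type*} [NormedAddCommGroup G] [NormedSpace ℝ G]
    {F : E × G → V} {x₀ : E} {K : Set G} (hK : IsCompact K) {n : ℕ∞ω} (hn : n ≠ ∞)
    (hF : ∀ y ∈ K, ContDiffAt ℝ n F (x₀, y)) :
    ∀ᶠ x in 𝓝 x₀, ∀ y ∈ K, ContDiffAt ℝ n F (x, y) :=
  hK.eventually_forall_of_forall_eventually fun y hy => (hF y hy).eventually hn

theorem contDiffAt_fderiv_comp_inl {G : Type*} [NormedAddCommGroup G] [NormedSpace ℝ G]
    {F : E × G → V} {p : E × G} {n : ℕ∞ω} (hF : ContDiffAt ℝ (n + 1) F p) :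
    ContDiffAt ℝ n (fun q => fderiv ℝ F q ∘L .inl ℝ E G) p :=
  (hF.fderiv_right le_rfl).clm_comp contDiffAt_const

theorem hasFDerivAt_intervalIntegral {F : E × ℝ → V} {x₀ : E}
    (hF : ∀ t ∈ uIcc a b, ContDiffAt ℝ 1 F (x₀, t)) :
    HasFDerivAt (fun x => ∫ t in a..b, F (x, t) ∂μ)
      (∫ t in a..b, fderiv ℝ F (x₀, t) ∘L .inl ℝ E ℝ ∂μ) x₀ := by
  have hF' : ∀ t ∈ uIcc a b, ContinuousAt (fun p => fderiv ℝ F p ∘L .inl ℝ E ℝ) (x₀, t) :=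
    fun t ht => (contDiffAt_fderiv_comp_inl (n := 0) (by simpa using hF t ht)).continuousAt
  have hnear := eventually_forall_contDiffAt isCompact_uIcc (by simp) hF
  have hslice : ∀ x, (∀ t ∈ uIcc a b, ContDiffAt ℝ 1 F (x, t)) →
      ContinuousOn (fun t => F (x, t)) (uIcc a b) :=
    fun x hx => continuousOn_curry_right fun t ht => (hx t ht).continuousAt
  obtain ⟨C, hC⟩ := exists_eventually_forall_norm_le isCompact_uIcc hF'
  refine intervalIntegral.hasFDerivAt_integral_of_dominated_of_fderiv_le
    (F' := fun x t => fderiv ℝ F (x, t) ∘L .inl ℝ E ℝ) (bound := fun _ => C)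
    (hnear.and hC) ?meas (hslice x₀ hF).intervalIntegrable ?meas' ?bound
    intervalIntegrable_const ?deriv
  case meas =>
    filter_upwards [hnear] with x hx
    exact ((hslice x hx).mono uIoc_subset_uIcc).aestronglyMeasurable measurableSet_uIoc
  case meas' =>
    exact ((continuousOn_curry_right hF').mono uIoc_subset_uIcc).aestronglyMeasurable
      measurableSet_uIoc
  case bound => exact .of_forall fun t ht x hx => hx.2 t (uIoc_subset_uIcc ht)
  case deriv =>
    refine .of_forall fun t ht x hx => ?_
    have hFx := ((hx.1 t (uIoc_subset_uIcc ht)).differentiableAt one_ne_zero).hasFDerivAt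
    exact hFx.comp x (hasFDerivAt_prodMk_left x t)

-- The universe of `W` absorbs that of `E`, so that the induction can pass from `W` to `E →L[ℝ] W`.
theorem contDiffAt_intervalIntegral_nat {W : Type (max u v)} [NormedAddCommGroup W]
    [NormedSpace ℝ W] {F : E × ℝ → W} {x₀ : E} {n : ℕ}
    (hF : ∀ t ∈ uIcc a b, ContDiffAt ℝ n F (x₀, t)) :
    ContDiffAt ℝ n (fun x => ∫ t in a..b, F (x, t) ∂μ) x₀ := by
  induction n generalizing W with
  | zero =>
    have hnear := eventually_forall_contDiffAt isCompact_uIcc (by simp) hF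
    refine contDiffAt_zero.2 ⟨_, hnear, continuousOn_of_forall_continuousAt fun x hx => ?_⟩
    exact continuousAt_intervalIntegral fun t ht =>
      ((hx t ht).eventually (by simp)).mono fun _ hp => hp.continuousAt
  | succ n ih =>
    have hnear := eventually_forall_contDiffAt isCompact_uIcc (by simp) hF
    have hF' : ∀ t ∈ uIcc a b, ContDiffAt ℝ n (fun p => fderiv ℝ F p ∘L .inl ℝ E ℝ) (x₀, t) :=
      fun t ht => contDiffAt_fderiv_comp_inl (hF t ht)
    refine contDiffAt_succ_iff_hasFDerivAt.2
      ⟨fun x => ∫ t in a..b, fderiv ℝ F (x, t) ∘L .inl ℝ E ℝ ∂μ, ⟨_, hnear, fun x hx => ?_⟩, ih hF'⟩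
    exact hasFDerivAt_intervalIntegral fun t ht => (hx t ht).of_le (by simp)

theorem contDiffAt_intervalIntegral {F : E × ℝ → V} {x₀ : E} {n : ℕ∞}
    (hF : ∀ t ∈ uIcc a b, ContDiffAt ℝ n F (x₀, t)) :
    ContDiffAt ℝ n (fun x => ∫ t in a..b, F (x, t) ∂μ) x₀ := by
  let e : ULift.{u} V ≃L[ℝ] V := ContinuousLinearEquiv.ulift
  have hlift : (fun x => ∫ t in a..b, F (x, t) ∂μ) =
      e ∘ fun x => ∫ t in a..b, e.symm (F (x, t)) ∂μ := by
    ext x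
    simp [intervalIntegral, e.symm.integral_comp_comm]
  have hnat (m : ℕ) (hm : ∀ t ∈ uIcc a b, ContDiffAt ℝ m F (x₀, t)) :
      ContDiffAt ℝ m (fun x => ∫ t in a..b, F (x, t) ∂μ) x₀ := by
    rw [hlift]
    exact e.contDiff.contDiffAt.comp _ <| contDiffAt_intervalIntegral_nat.{u, v} fun t ht =>
      e.symm.contDiff.contDiffAt.comp _ (hm t ht)
  cases n with
  | top => exact contDiffAt_infty.2 fun m => hnat m fun t ht => contDiffAt_infty.1 (hF t ht) m
  | coe m => exact hnat m hF

end ParametricIntegral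

section ClosedTube

variable {T X : Type*} [PseudoMetricSpace X] {γ : T → X} {ρ : T → ℝ} {K : Set T}

/-- The closed tube of variable radius `ρ` around the part of the path `γ` parametrized by `K`; it
serves to locate the support of `bridgeField`. Parameters where `ρ` is negative contribute
nothing. -/
def closedTube (γ : T → X) (ρ : T → ℝ) (K : Set T) : Set X :=
  ⋃ t ∈ K, closedBall (γ t) (ρ t)

theorem mem_closedTube {x : X} : x ∈ closedTube γ ρ K ↔ ∃ t ∈ K, dist x (γ t) ≤ ρ t := by
  simp [closedTube]

theorem notMem_closedTube_of_mul_le_dist {r R : ℝ} (hr : r < R) (hρ : ∀ t ∈ K, 0 < ρ t) {p : X}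
    (hp : ∀ t ∈ K, R * ρ t ≤ dist p (γ t)) : p ∉ closedTube γ (fun t => r * ρ t) K := by
  intro hmem
  obtain ⟨t, ht, hle⟩ := mem_closedTube.1 hmem
  exact (mul_lt_mul_of_pos_right hr (hρ t ht)).not_ge ((hp t ht).trans hle)

variable [TopologicalSpace T]

theorem isClosed_closedTube (hK : IsCompact K) (hγ : ContinuousOn γ K) (hρ : ContinuousOn ρ K) :
    IsClosed (closedTube γ ρ K) := by
  have : CompactSpace K := isCompact_iff_compactSpace.1 hK
  have hγ' : Continuous fun t : K => γ t := hγ.domRestrict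
  have hρ' : Continuous fun t : K => ρ t := hρ.domRestrict
  have hgraph : IsClosed {q : K × X | dist q.2 (γ q.1) ≤ ρ q.1} :=
    isClosed_le (continuous_snd.dist (hγ'.comp continuous_fst)) (hρ'.comp continuous_fst)
  convert isClosedMap_snd_of_compactSpace _ hgraph using 1
  ext x
  simp [mem_closedTube]

theorem isBounded_closedTube (hK : IsCompact K) (hγ : ContinuousOn γ K) (hρ : ContinuousOn ρ K) :
    Bornology.IsBounded (closedTube γ ρ K) := by
  obtain ⟨M, hM⟩ := hK.bddAbove_image hρ
  refine (hK.image_of_continuousOn hγ).isBounded.cthickening (δ := M) |>.subset fun x hx => ?_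
  obtain ⟨t, ht, hle⟩ := mem_closedTube.1 hx
  exact mem_cthickening_of_dist_le x (γ t) M _ (mem_image_of_mem γ ht)
    (hle.trans (hM (mem_image_of_mem ρ ht)))

theorem isCompact_closedTube [ProperSpace X] (hK : IsCompact K) (hγ : ContinuousOn γ K)
    (hρ : ContinuousOn ρ K) : IsCompact (closedTube γ ρ K) :=
  isCompact_of_isClosed_isBounded (isClosed_closedTube hK hγ hρ) (isBounded_closedTube hK hγ hρ)

end ClosedTube

theorem support_comp_inv_smul_sub_subset_closedBall {E M : Type*} [SeminormedAddCommGroup E]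
    [NormedSpace ℝ E] [Zero M] {s : E → M} {r c : ℝ} (hs : support s ⊆ closedBall 0 r)
    (hc : 0 < c) (y : E) : support (fun x => s (c⁻¹ • (x - y))) ⊆ closedBall y (r * c) := by
  intro x hx
  have hnorm : ‖c⁻¹ • (x - y)‖ ≤ r := mem_closedBall_zero_iff.1 (hs hx)
  rwa [norm_smul, norm_inv, Real.norm_of_nonneg hc.le, inv_mul_le_iff₀ hc, mul_comm,
    ← mem_closedBall_iff_norm] at hnorm

section BridgeField

variable {γ₀ : ℝ → E3} {s : E3 → ℝ} {ε : ℝ}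

theorem mul_one_sub_pos {t : ℝ} (ht : t ∈ Ioo (0 : ℝ) 1) : 0 < t * (1 - t) :=
  mul_pos ht.1 (sub_pos.2 ht.2)

theorem uIcc_one_sub_subset_Ioo (hε : ε ∈ Ioo (0 : ℝ) 1) : uIcc ε (1 - ε) ⊆ Ioo 0 1 :=
  ordConnected_Ioo.uIcc_subset hε ⟨sub_pos.2 hε.2, sub_lt_self 1 hε.1⟩

theorem contDiff_bridgeField {n : ℕ∞} (hγ : ContDiff ℝ (n + 1) γ₀) (hs : ContDiff ℝ n s)
    (hε : ε ∈ Ioo (0 : ℝ) 1) : ContDiff ℝ n (bridgeField γ₀ s ε) := by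
  have hγn : ContDiff ℝ n γ₀ := hγ.of_le le_self_add
  refine contDiff_iff_contDiffAt.2 fun x => contDiffAt_intervalIntegral (F := fun p : E3 × ℝ =>
    (s ((p.2 * (1 - p.2))⁻¹ • (p.1 - γ₀ p.2)) / (p.2 * (1 - p.2)) ^ 3) •
      (deriv γ₀ p.2 + ((1 - 2 * p.2) * (p.2 * (1 - p.2))⁻¹) • (p.1 - γ₀ p.2))) fun t ht => ?_
  have hweight : t * (1 - t) ≠ 0 := (mul_one_sub_pos (uIcc_one_sub_subset_Ioo hε ht)).ne'
  fun_prop (disch := first | exact hweight | exact pow_ne_zero 3 hweight)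

theorem support_bridgeField_subset_closedTube {r : ℝ} (hs : support s ⊆ closedBall 0 r)
    (hε : ε ∈ Ioo (0 : ℝ) 1) :
    support (bridgeField γ₀ s ε) ⊆
      closedTube γ₀ (fun t => r * (t * (1 - t))) (uIcc ε (1 - ε)) := by
  refine support_subset_iff'.2 fun x hx =>
    intervalIntegral.integral_zero_ae (.of_forall fun t ht => ?_)
  replace ht := uIoc_subset_uIcc ht
  have hs₀ : s ((t * (1 - t))⁻¹ • (x - γ₀ t)) = 0 := by
    by_contra hne
    exact hx <| mem_closedTube.2 ⟨t, ht, support_comp_inv_smul_sub_subset_closedBall hs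
      (mul_one_sub_pos (uIcc_one_sub_subset_Ioo hε ht)) (γ₀ t) hne⟩
  rw [hs₀, zero_div, zero_smul]

end BridgeField

/-- If the smooth path `γ₀` from `x₁` to `x₂` stays at distance `≥ R u(1−u)` from the
endpoints and the smooth mollifier `s` is supported in a ball of radius `R' < R`, then
for `0 < ε < 1/2` the field `b_ε` is a smooth compactly supported vector field which
vanishes identically on open neighborhoods of `x₁` and of `x₂`. -/
theorem bridgeField_smooth_vanishes_near_charges (x₁ x₂ : E3) (γ₀ : ℝ → E3)
    (hγ : ContDiff ℝ (⊤ : ℕ∞) γ₀) (hγ0 : γ₀ 0 = x₁) (hγ1 : γ₀ 1 = x₂)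
    (R R' : ℝ) (hR : 0 < R) (hR' : R' < R)
    (hsep : ∀ u ∈ Set.Ioo (0:ℝ) 1, ∀ p ∈ ({x₁, x₂} : Set E3),
      R * (u * (1 - u)) ≤ ‖γ₀ u - p‖)
    (s : E3 → ℝ) (hs : ContDiff ℝ (⊤ : ℕ∞) s) (hss : tsupport s ⊆ Metric.closedBall 0 R')
    (ε : ℝ) (hε0 : 0 < ε) (hε : ε < 1 / 2) :
    ContDiff ℝ (⊤ : ℕ∞) (bridgeField γ₀ s ε) ∧
    HasCompactSupport (bridgeField γ₀ s ε) ∧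
    (∃ U : Set E3, IsOpen U ∧ x₁ ∈ U ∧ ∀ x ∈ U, bridgeField γ₀ s ε x = 0) ∧
    (∃ U : Set E3, IsOpen U ∧ x₂ ∈ U ∧ ∀ x ∈ U, bridgeField γ₀ s ε x = 0) := by
  have hε' : ε ∈ Ioo (0 : ℝ) 1 := ⟨hε0, hε.trans one_half_lt_one⟩
  let tube := closedTube γ₀ (fun u => R' * (u * (1 - u))) (uIcc ε (1 - ε))
  have htube : IsCompact tube :=
    isCompact_closedTube isCompact_uIcc hγ.continuous.continuousOn (by fun_prop)
  have hzero : ∀ x ∉ tube, bridgeField γ₀ s ε x = 0 := support_subset_iff'.1 <|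
    support_bridgeField_subset_closedTube ((subset_tsupport s).trans hss) hε'
  have hcharge : ∀ p ∈ ({x₁, x₂} : Set E3), p ∉ tube := fun p hp =>
    notMem_closedTube_of_mul_le_dist hR'
      (fun u hu => mul_one_sub_pos (uIcc_one_sub_subset_Ioo hε' hu)) fun u hu => by
        simpa only [dist_eq_norm'] using hsep u (uIcc_one_sub_subset_Ioo hε' hu) p hp
  have hopen : IsOpen tubeᶜ := htube.isClosed.isOpen_compl
  exact ⟨contDiff_bridgeField hγ hs hε', .intro htube hzero,
    ⟨tubeᶜ, hopen, hcharge x₁ (by simp), hzero⟩, ⟨tubeᶜ, hopen, hcharge x₂ (by simp), hzero⟩⟩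
end

section
/- Let x₁, x₂ ∈ ℝ³, let γ₀ : [0,1] → ℝ³ be a C¹ path with γ₀(0) = x₁, γ₀(1) = x₂, and γ_y(u) = γ₀(u) + u(1−u)y. Let s : ℝ³ → ℝ be a compactly supported continuous function with supp s ⊆ closedBall(0, M), and for 0 < ε < 1/2 define ⟨b_ε, g⟩ = ∫_ε^{1−ε} ∫_{ℝ³} s(y) g(γ_y(u)) · (γ₀'(u) + (1−2u)y) dy du. Let g : ℝ³ → ℝ³ be continuous and suppose there is δ > 0 such that g vanishes on ball(x₁, δ) and on ball(x₂, δ). Then there exists ε₀ ∈ (0, 1/2) such that ⟨b_ε, g⟩ = ⟨b_{ε₀}, g⟩ for all 0 < ε ≤ ε₀; in particular lim_{ε→0} ⟨b_ε, g⟩ exists and equals ⟨b_{ε₀}, g⟩. (The gauge-bridge pairing with observables supported away from the charges stabilizes for small ε.) -/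
/-!
As `u` tends to `0` or `1`, the factor `u(1-u)` tends to `0`, so the points `γ_y(u)` with `y` in
the bounded set `supp s` converge *uniformly in `y`* to the corresponding endpoint of `γ₀`. Near
the ends of the parameter interval they all lie where the observable vanishes, and the inner
integral is identically zero. Decreasing `ε` therefore only enlarges the interval of integration
by pieces on which the integrand is zero.
-/

open MeasureTheory Filter

/-- Euclidean inner product on ℝ³. -/
def dotE (v w : E3) : ℝ := ∑ i, v i * w i

/-- The gauge-bridge pairing
`⟨b_ε, g⟩ = ∫_ε^{1−ε} ∫ s(y) g(γ_y(u)) · (γ₀'(u) + (1−2u)y) dy du`,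
where `γ_y(u) = γ₀(u) + u(1−u)y`. -/
noncomputable def bridgePairE (γ₀ : ℝ → E3) (s : E3 → ℝ) (ε : ℝ) (g : E3 → E3) : ℝ :=
  ∫ u in ε..(1 - ε),
    ∫ y, s y * dotE (g (γ₀ u + (u * (1 - u)) • y)) (deriv γ₀ u + (1 - 2 * u) • y)

open Bornology Set Topology
open scoped Pointwise

theorem eventually_forall_add_smul_mem {𝕜 E ι : Type*} [NormedField 𝕜] [AddCommGroup E]
    [Module 𝕜 E] [TopologicalSpace E] [ContinuousAdd E] {l : Filter ι} {f : ι → E} {c : ι → 𝕜}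
    {x : E} {S U : Set E} (hf : Tendsto f l (𝓝 x)) (hc : Tendsto c l (𝓝 0))
    (hS : IsVonNBounded 𝕜 S) (hU : U ∈ 𝓝 x) : ∀ᶠ i in l, ∀ y ∈ S, f i + c i • y ∈ U := by
  have hadd : Tendsto (fun p : E × E => p.1 + p.2) (𝓝 x ×ˢ 𝓝 0) (𝓝 x) := by
    simpa only [nhds_prod_eq, add_zero] using continuous_add.tendsto (x, (0 : E))
  obtain ⟨V, hV, W, hW, hVW⟩ := mem_prod_iff.1 (hadd hU)
  have hsmul : ∀ᶠ i in l, c i • S ⊆ W :=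
    (hS.tendsto_smallSets_nhds.comp hc).eventually (eventually_smallSets_subset.2 hW)
  filter_upwards [hf hV, hsmul] with i hfi hci y hy
  exact hVW (mk_mem_prod hfi (hci (smul_mem_smul_set hy)))

theorem exists_forall_intervalIntegral_add_sub_eq {F : Type*} [NormedAddCommGroup F]
    [NormedSpace ℝ F] {μ : Measure ℝ} {f : ℝ → F} {a b : ℝ} (hab : a < b)
    (ha : f =ᶠ[𝓝[>] a] 0) (hb : f =ᶠ[𝓝[<] b] 0) :
    ∃ ε₀, 0 < ε₀ ∧ ε₀ < (b - a) / 2 ∧ ∀ ε, 0 < ε → ε ≤ ε₀ →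
      ∫ u in (a + ε)..(b - ε), f u ∂μ = ∫ u in (a + ε₀)..(b - ε₀), f u ∂μ := by
  obtain ⟨c, hac, hc⟩ := mem_nhdsGT_iff_exists_Ioo_subset.1 ha
  obtain ⟨d, hdb, hd⟩ := mem_nhdsLT_iff_exists_Ioo_subset.1 hb
  obtain ⟨ε₀, hε₀, hlt⟩ : ∃ ε₀, 0 < ε₀ ∧ ε₀ < min (min (c - a) (b - d)) ((b - a) / 2) :=
    exists_between (lt_min (lt_min (sub_pos.2 hac) (sub_pos.2 hdb)) (half_pos (sub_pos.2 hab)))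
  obtain ⟨⟨hεc, hεd⟩, hhalf⟩ : (ε₀ < c - a ∧ ε₀ < b - d) ∧ ε₀ < (b - a) / 2 := by
    simpa only [lt_min_iff] using hlt
  refine ⟨ε₀, hε₀, hhalf, fun ε hε hle => ?_⟩
  rw [intervalIntegral.integral_of_le (by linarith), intervalIntegral.integral_of_le (by linarith)]
  refine setIntegral_eq_of_subset_of_forall_sdiff_eq_zero measurableSet_Ioc
    (Ioc_subset_Ioc (by linarith) (by linarith)) ?_
  rintro u ⟨⟨hu_left, hu_right⟩, hu⟩
  rcases le_or_gt u (a + ε₀) with h | h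
  · exact hc ⟨by linarith, by linarith⟩
  · have hu_end : b - ε₀ < u := not_le.1 fun h' => hu ⟨h, h'⟩
    exact hd ⟨by linarith, by linarith⟩

section Bridge

variable {E F : Type*} [NormedAddCommGroup E] [NormedSpace ℝ E]
  [NormedAddCommGroup F] [NormedSpace ℝ F]

/-- The path `γ_y(u) = γ₀(u) + u(1-u)y`: the reference path `γ₀` bent in the direction `y` with its
endpoints fixed. -/
def bridgePath (γ₀ : ℝ → E) (y : E) (u : ℝ) : E :=
  γ₀ u + (u * (1 - u)) • y

theorem deriv_bridgePath {γ₀ : ℝ → E} {u : ℝ} (hγ : DifferentiableAt ℝ γ₀ u) (y : E) :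
    deriv (bridgePath γ₀ y) u = deriv γ₀ u + (1 - 2 * u) • y := by
  have hcoeff : HasDerivAt (fun t : ℝ => t * (1 - t)) (1 - 2 * u) u :=
    ((hasDerivAt_id' u).fun_mul ((hasDerivAt_id' u).const_sub 1)).congr_deriv (by ring)
  exact (hγ.hasDerivAt.add (hcoeff.smul_const y)).deriv

variable [MeasurableSpace E]

/-- The truncated gauge bridge as a current: the integral of the one-form `ω` along the bridge paths
`γ_y` restricted to `[ε, 1 - ε]`, superposed over `y` with weight `s` with respect to `μ`. A vector
field on an inner product space is paired with the bridge through its dual one-form. -/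
noncomputable def bridgePair (μ : Measure E) (γ₀ : ℝ → E) (s : E → ℝ) (ε : ℝ)
    (ω : E → E →L[ℝ] F) : F :=
  ∫ u in ε..(1 - ε), ∫ y, s y • ω (bridgePath γ₀ y u) (deriv (bridgePath γ₀ y) u) ∂μ

theorem eventually_integral_bridgePath_eq_zero {μ : Measure E} {γ₀ : ℝ → E} {s : E → ℝ}
    {ω : E → E →L[ℝ] F} {x : E} {l : Filter ℝ} (hγ : Tendsto γ₀ l (𝓝 x))
    (hl : Tendsto (fun u : ℝ => u * (1 - u)) l (𝓝 0)) (hs : IsBounded (Function.support s))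
    (hω : ω =ᶠ[𝓝 x] 0) :
    ∀ᶠ u in l, ∫ y, s y • ω (bridgePath γ₀ y u) (deriv (bridgePath γ₀ y) u) ∂μ = 0 := by
  filter_upwards [eventually_forall_add_smul_mem hγ hl
    (NormedSpace.isVonNBounded_of_isBounded ℝ hs) hω] with u hu
  refine integral_eq_zero_of_ae (Eventually.of_forall fun y => ?_)
  by_cases hy : s y = 0
  · simp [hy]
  · have hωy : ω (bridgePath γ₀ y u) = 0 := hu y hy
    simp [hωy]

theorem bridgePair_stabilizes_general {μ : Measure E} {γ₀ : ℝ → E}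
    (hγ : DifferentiableOn ℝ γ₀ (Icc 0 1)) {s : E → ℝ} (hs : IsBounded (Function.support s))
    {ω : E → E →L[ℝ] F} (hω₀ : ω =ᶠ[𝓝 (γ₀ 0)] 0) (hω₁ : ω =ᶠ[𝓝 (γ₀ 1)] 0) :
    ∃ ε₀ : ℝ, 0 < ε₀ ∧ ε₀ < 1 / 2 ∧
      (∀ ε : ℝ, 0 < ε → ε ≤ ε₀ → bridgePair μ γ₀ s ε ω = bridgePair μ γ₀ s ε₀ ω) ∧
      Tendsto (fun ε => bridgePair μ γ₀ s ε ω) (𝓝[>] 0) (𝓝 (bridgePair μ γ₀ s ε₀ ω)) := by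
  have hγ₀ : Tendsto γ₀ (𝓝[>] 0) (𝓝 (γ₀ 0)) :=
    (hγ.continuousOn 0 (by simp)).mono_left
      (nhdsWithin_le_of_mem (Icc_mem_nhdsGT zero_lt_one))
  have hγ₁ : Tendsto γ₀ (𝓝[<] 1) (𝓝 (γ₀ 1)) :=
    (hγ.continuousOn 1 (by simp)).mono_left
      (nhdsWithin_le_of_mem (Icc_mem_nhdsLT zero_lt_one))
  have hcoeff : Continuous fun u : ℝ => u * (1 - u) := by fun_prop
  obtain ⟨ε₀, hε₀, hhalf, hconst⟩ := exists_forall_intervalIntegral_add_sub_eq (μ := volume)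
    zero_lt_one
    (eventually_integral_bridgePath_eq_zero (μ := μ) hγ₀
      ((hcoeff.tendsto' 0 0 (by simp)).mono_left nhdsWithin_le_nhds) hs hω₀)
    (eventually_integral_bridgePath_eq_zero (μ := μ) hγ₁
      ((hcoeff.tendsto' 1 0 (by simp)).mono_left nhdsWithin_le_nhds) hs hω₁)
  simp only [zero_add, sub_zero] at hhalf hconst
  refine ⟨ε₀, hε₀, hhalf, hconst, tendsto_const_nhds.congr' ?_⟩
  filter_upwards [Ioc_mem_nhdsGT hε₀] with ε hε
  exact (hconst ε hε.1 hε.2).symm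

end Bridge

theorem dotE_eq_inner (v w : E3) : dotE v w = inner ℝ v w := by
  simp [dotE, PiLp.inner_apply, mul_comm]

theorem bridgePairE_eq_bridgePair {γ₀ : ℝ → E3} (hγ : Differentiable ℝ γ₀) (s : E3 → ℝ) (ε : ℝ)
    (g : E3 → E3) :
    bridgePairE γ₀ s ε g = bridgePair volume γ₀ s ε fun x => innerSL ℝ (g x) := by
  simp only [bridgePairE, bridgePair, deriv_bridgePath (hγ _), bridgePath, dotE_eq_inner,
    innerSL_apply_apply, smul_eq_mul]

theorem innerSL_comp_eventuallyEq_zero {X E : Type*} [PseudoMetricSpace X] [NormedAddCommGroup E]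
    [InnerProductSpace ℝ E] {g : X → E} {x : X} {δ : ℝ} (hδ : 0 < δ)
    (hg : ∀ z ∈ Metric.ball x δ, g z = 0) : (fun z => innerSL ℝ (g z)) =ᶠ[𝓝 x] 0 := by
  filter_upwards [Metric.ball_mem_nhds x hδ] with z hz
  simp [hg z hz]

/-- The gauge-bridge pairing with observables supported away from the charges
stabilizes for small `ε`: if the continuous field `g` vanishes on balls around the
two endpoints `x₁, x₂` of the bridge, then `⟨b_ε, g⟩` is constant for `ε ≤ ε₀`;
in particular `lim_{ε→0} ⟨b_ε, g⟩` exists and equals `⟨b_{ε₀}, g⟩`. -/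
theorem bridgePair_stabilizes (x₁ x₂ : E3) (γ₀ : ℝ → E3) (hγ : ContDiff ℝ 1 γ₀)
    (hγ0 : γ₀ 0 = x₁) (hγ1 : γ₀ 1 = x₂)
    (s : E3 → ℝ) (hs : Continuous s) (hsc : HasCompactSupport s)
    (M : ℝ) (hss : tsupport s ⊆ Metric.closedBall 0 M)
    (g : E3 → E3) (hg : Continuous g) (δ : ℝ) (hδ : 0 < δ)
    (hg1 : ∀ x ∈ Metric.ball x₁ δ, g x = 0)
    (hg2 : ∀ x ∈ Metric.ball x₂ δ, g x = 0) :
    ∃ ε₀ : ℝ, 0 < ε₀ ∧ ε₀ < 1 / 2 ∧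
      (∀ ε : ℝ, 0 < ε → ε ≤ ε₀ → bridgePairE γ₀ s ε g = bridgePairE γ₀ s ε₀ g) ∧
      Tendsto (fun ε => bridgePairE γ₀ s ε g) (nhdsWithin 0 (Set.Ioi 0))
        (nhds (bridgePairE γ₀ s ε₀ g)) := by
  subst hγ0 hγ1
  have hdiff : Differentiable ℝ γ₀ := hγ.differentiable one_ne_zero
  simpa only [bridgePairE_eq_bridgePair hdiff] using
    bridgePair_stabilizes_general hdiff.differentiableOn
      (Metric.isBounded_closedBall.subset ((subset_tsupport s).trans hss))
      (innerSL_comp_eventuallyEq_zero hδ hg1) (innerSL_comp_eventuallyEq_zero hδ hg2)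
end

section
/- Let x₁, x₂ ∈ ℝ³, let γ₀ : [0,1] → ℝ³ be a continuous path with γ₀(0) = x₁, γ₀(1) = x₂, and let s : ℝ³ → ℝ be continuous with supp s ⊆ closedBall(0, M). For 0 < ε < 1/2 define b_ε : ℝ³ → ℝ³ by b_ε(x) = ∫_ε^{1−ε} (u(1−u))^{−3} s( (x − γ₀(u))/(u(1−u)) ) · ( γ₀'(u) + (1−2u)(x − γ₀(u))/(u(1−u)) ) du (assuming γ₀ is C¹). Then for every compact set K ⊂ ℝ³ with x₁ ∉ K and x₂ ∉ K there exists ε₀ ∈ (0, 1/2) such that b_ε(x) = b_{ε₀}(x) for all x ∈ K and all 0 < ε ≤ ε₀. (Hence the gauge-bridge field b₀ = lim b_ε is, on any compact subset of ℝ³ \ {x₁, x₂}, given by one of the smooth fields b_{ε₀}.) -/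
/-!
At time `u`, the integrand of `bridgeField γ₀ s ε x` can be nonzero only if `x` lies within
`M * (u * (1 - u))` of `γ₀ u`. As `u` tends to an endpoint `0` or `1`, this radius tends to `0`
while `γ₀ u` tends to `x₁` or `x₂`, which is at positive distance from `K`. Hence the integrand
vanishes for `u` close to the endpoints, uniformly in `x ∈ K`, and a smaller `ε` only adds to the
integral times `u` at which it is zero.
-/

open MeasureTheory

section Localization

open Filter Function Set Topology

theorem eventually_forall_mem_lt_dist {α X : Type*} [PseudoMetricSpace X] {l : Filter α}
    {γ : α → X} {r : α → ℝ} {p : X} {K : Set X} (hK : IsClosed K) (hp : p ∉ K)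
    (hγ : Tendsto γ l (𝓝 p)) (hr : Tendsto r l (𝓝 0)) :
    ∀ᶠ u in l, ∀ x ∈ K, r u < dist x (γ u) := by
  obtain ⟨δ, hδ, hball⟩ := Metric.isOpen_iff.1 hK.isOpen_compl p hp
  have hsum : Tendsto (fun u ↦ r u + dist (γ u) p) l (𝓝 0) := by
    simpa using hr.add (tendsto_iff_dist_tendsto_zero.1 hγ)
  filter_upwards [hsum.eventually_lt_const hδ] with u hu x hx
  have hfar : δ ≤ dist x p := not_lt.1 fun h ↦ hball h hx
  linarith [dist_triangle x (γ u) p]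

theorem eventually_forall_mem_apply_inv_smul_sub_eq_zero {α 𝕜 E R : Type*}
    [NormedDivisionRing 𝕜] [SeminormedAddCommGroup E] [Module 𝕜 E] [NormSMulClass 𝕜 E] [Zero R]
    {l : Filter α} {γ : α → E} {t : α → 𝕜} {s : E → R} {p : E} {K : Set E}
    (hs : Bornology.IsBounded (support s)) (hK : IsClosed K) (hp : p ∉ K)
    (hγ : Tendsto γ l (𝓝 p)) (ht : Tendsto t l (𝓝[≠] 0)) :
    ∀ᶠ u in l, ∀ x ∈ K, s ((t u)⁻¹ • (x - γ u)) = 0 := by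
  obtain ⟨M, hM⟩ := (Metric.isBounded_iff_subset_closedBall 0).1 hs
  obtain ⟨ht_zero, ht_ne⟩ := tendsto_nhdsWithin_iff.1 ht
  have hradius : Tendsto (fun u ↦ M * ‖t u‖) l (𝓝 0) := by
    simpa using ht_zero.norm.const_mul M
  filter_upwards [eventually_forall_mem_lt_dist hK hp hγ hradius, ht_ne] with u hfar hne x hx
  by_contra hsupp
  have hnear : ‖(t u)⁻¹ • (x - γ u)‖ ≤ M := mem_closedBall_zero_iff.1 (hM hsupp)
  rw [norm_smul, norm_inv, inv_mul_le_iff₀' (norm_pos_iff.2 hne), ← dist_eq_norm] at hnear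
  exact (hfar x hx).not_ge hnear

end Localization

section TruncatedIntegral

open Filter Set Topology

variable {F : Type*} [NormedAddCommGroup F] [NormedSpace ℝ F]

theorem intervalIntegral_eq_of_eq_zero_on_Ioc {f : ℝ → F} {μ : Measure ℝ} {a b c d : ℝ}
    (hac : a ≤ c) (hcd : c ≤ d) (hdb : d ≤ b) (hleft : ∀ u ∈ Ioc a c, f u = 0)
    (hright : ∀ u ∈ Ioc d b, f u = 0) : ∫ u in a..b, f u ∂μ = ∫ u in c..d, f u ∂μ := by
  rw [intervalIntegral.integral_of_le (by linarith), intervalIntegral.integral_of_le hcd]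
  refine setIntegral_eq_of_subset_of_forall_sdiff_eq_zero measurableSet_Ioc
    (Ioc_subset_Ioc hac hdb) fun u ⟨hu, hu'⟩ ↦ ?_
  rcases le_or_gt u c with huc | hcu
  · exact hleft u ⟨hu.1, huc⟩
  · exact hright u ⟨not_le.1 fun hud ↦ hu' ⟨hcu, hud⟩, hu.2⟩

theorem eventually_forall_mem_intervalIntegral_eq {ι : Type*} {f : ι → ℝ → F} {K : Set ι}
    {μ : Measure ℝ} {a b : ℝ} (hab : a < b) (ha : ∀ᶠ u in 𝓝[>] a, ∀ x ∈ K, f x u = 0)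
    (hb : ∀ᶠ u in 𝓝[<] b, ∀ x ∈ K, f x u = 0) :
    ∀ᶠ ε₀ in 𝓝[>] 0, ∀ x ∈ K, ∀ ε, 0 < ε → ε ≤ ε₀ →
      ∫ u in (a + ε)..(b - ε), f x u ∂μ = ∫ u in (a + ε₀)..(b - ε₀), f x u ∂μ := by
  obtain ⟨c, hac, hc⟩ := (mem_nhdsGT_iff_exists_Ioc_subset (a := a)).1 ha
  obtain ⟨d, hdb, hd⟩ := (mem_nhdsLT_iff_exists_Ico_subset (a := b)).1 hb
  filter_upwards [Ioo_mem_nhdsGT (sub_pos.2 hac), Ioo_mem_nhdsGT (sub_pos.2 hdb),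
    Ioo_mem_nhdsGT (half_pos (sub_pos.2 hab))] with ε₀ hεc hεd hεab x hx ε hε hle
  have hmid : a + ε₀ ≤ b - ε₀ := by linarith [hεab.2]
  refine intervalIntegral_eq_of_eq_zero_on_Ioc (by gcongr) hmid (by gcongr)
    (fun u hu ↦ hc ⟨?_, ?_⟩ x hx) (fun u hu ↦ hd ⟨?_, ?_⟩ x hx)
  · linarith [hu.1]
  · linarith [hu.2, hεc.2]
  · linarith [hu.1, hεd.2]
  · linarith [hu.2]

end TruncatedIntegral

section Bridge

open Filter Function Set Topology

variable {E : Type*} [NormedAddCommGroup E] [NormedSpace ℝ E]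

/-- The integrand at time `u` of the gauge-bridge field at `x`, in any real normed space. The
power `n` of the weight is free; normalization of the rescaled `s` corresponds to `n = dim E`. -/
noncomputable def bridgeIntegrand (n : ℕ) (γ : ℝ → E) (s : E → ℝ) (x : E) (u : ℝ) : E :=
  (s ((u * (1 - u))⁻¹ • (x - γ u)) / (u * (1 - u)) ^ n) •
    (deriv γ u + ((1 - 2 * u) * (u * (1 - u))⁻¹) • (x - γ u))

theorem eventually_forall_mem_bridgeIntegrand_eq_zero (n : ℕ) {γ : ℝ → E} {s : E → ℝ}
    {l : Filter ℝ} {p : E} {K : Set E} (hs : Bornology.IsBounded (support s)) (hK : IsClosed K)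
    (hp : p ∉ K) (hγ : Tendsto γ l (𝓝 p)) (hl : Tendsto (fun u ↦ u * (1 - u)) l (𝓝[≠] 0)) :
    ∀ᶠ u in l, ∀ x ∈ K, bridgeIntegrand n γ s x u = 0 := by
  filter_upwards [eventually_forall_mem_apply_inv_smul_sub_eq_zero hs hK hp hγ hl] with u hu x hx
  rw [bridgeIntegrand, hu x hx, zero_div, zero_smul]

theorem tendsto_mul_one_sub_nhdsNE {u₀ : ℝ} (hu₀ : u₀ ≠ 1 / 2) :
    Tendsto (fun u ↦ u * (1 - u)) (𝓝[≠] u₀) (𝓝[≠] (u₀ * (1 - u₀))) := by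
  have hderiv : HasDerivAt (fun u ↦ u * (1 - u)) (1 - 2 * u₀) u₀ :=
    ((hasDerivAt_id' u₀).fun_mul ((hasDerivAt_id' u₀).const_sub 1)).congr_deriv (by ring)
  exact hderiv.tendsto_nhdsNE fun h ↦ hu₀ (by linarith)

theorem bridgeField_stabilizes_on_compacts_general (n : ℕ) {γ : ℝ → E} {s : E → ℝ} {x₁ x₂ : E}
    (hγ₀ : Tendsto γ (𝓝[>] 0) (𝓝 x₁)) (hγ₁ : Tendsto γ (𝓝[<] 1) (𝓝 x₂))
    (hs : Bornology.IsBounded (support s)) {K : Set E} (hK : IsClosed K) (hx₁ : x₁ ∉ K)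
    (hx₂ : x₂ ∉ K) :
    ∃ ε₀ : ℝ, 0 < ε₀ ∧ ε₀ < 1 / 2 ∧ ∀ x ∈ K, ∀ ε : ℝ, 0 < ε → ε ≤ ε₀ →
      ∫ u in ε..(1 - ε), bridgeIntegrand n γ s x u =
        ∫ u in ε₀..(1 - ε₀), bridgeIntegrand n γ s x u := by
  have hweight₀ : Tendsto (fun u : ℝ ↦ u * (1 - u)) (𝓝[>] 0) (𝓝[≠] 0) := by
    simpa using (tendsto_mul_one_sub_nhdsNE (u₀ := 0) (by norm_num)).mono_left (nhdsGT_le_nhdsNE 0)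
  have hweight₁ : Tendsto (fun u : ℝ ↦ u * (1 - u)) (𝓝[<] 1) (𝓝[≠] 0) := by
    simpa using (tendsto_mul_one_sub_nhdsNE (u₀ := 1) (by norm_num)).mono_left (nhdsLT_le_nhdsNE 1)
  have hstable := eventually_forall_mem_intervalIntegral_eq (μ := volume) one_pos
    (eventually_forall_mem_bridgeIntegrand_eq_zero n hs hK hx₁ hγ₀ hweight₀)
    (eventually_forall_mem_bridgeIntegrand_eq_zero n hs hK hx₂ hγ₁ hweight₁)
  simp only [zero_add] at hstable
  obtain ⟨ε₀, hεstable, hε₀⟩ := (hstable.and (Ioo_mem_nhdsGT one_half_pos)).exists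
  exact ⟨ε₀, hε₀.1, hε₀.2, hεstable⟩

end Bridge

/-- On every compact set avoiding the two charge locations, the gauge-bridge fields
`b_ε` stabilize for small `ε`: hence the limit field `b₀ = lim b_ε` is, on any compact
subset of `ℝ³ \ {x₁, x₂}`, given by one of the smooth fields `b_{ε₀}`. -/
theorem bridgeField_stabilizes_on_compacts (x₁ x₂ : E3) (γ₀ : ℝ → E3)
    (hγ : ContDiff ℝ 1 γ₀) (hγ0 : γ₀ 0 = x₁) (hγ1 : γ₀ 1 = x₂)
    (s : E3 → ℝ) (hs : Continuous s) (M : ℝ)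
    (hss : tsupport s ⊆ Metric.closedBall 0 M) :
    ∀ K : Set E3, IsCompact K → x₁ ∉ K → x₂ ∉ K →
      ∃ ε₀ : ℝ, 0 < ε₀ ∧ ε₀ < 1 / 2 ∧
        ∀ x ∈ K, ∀ ε : ℝ, 0 < ε → ε ≤ ε₀ →
          bridgeField γ₀ s ε x = bridgeField γ₀ s ε₀ x := by
  intro K hK hx₁ hx₂
  exact bridgeField_stabilizes_on_compacts_general 3
    ((hγ.continuous.tendsto' 0 x₁ hγ0).mono_left nhdsWithin_le_nhds)
    ((hγ.continuous.tendsto' 1 x₂ hγ1).mono_left nhdsWithin_le_nhds)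
    (Metric.isBounded_closedBall.subset ((subset_tsupport s).trans hss)) hK.isClosed hx₁ hx₂
end
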